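/- arXiv:2404.09588 — 2 statements merged into one kernel-verified Lean document; each statement's English description precedes it below -/
import Mathlib

section
/- Let n ≥ 1, α > 0, q ∈ (1,∞), q̄(·) ∈ P^emb_q(ℝ^n), and let p : [0,∞) → [1,∞) be measurable with 1 < p⁻ ≤ p⁺ < ∞. Then there exists a constant C > 0, independent of T and f, such that for all T > 0 and all measurable f : (0,∞)×ℝ^n → ℝ with ∫_0^∞ ‖f(s,·)‖_{L^{q̄(·)}(ℝ^n)} ds < ∞: ‖(t,x) ↦ ∫_0^t (𝔤_{t−s}^α ∗ f(s,·))(x) ds‖_{E_T} ≤ C · max{T^{1/p⁻}, T^{1/p⁺}} · ∫_0^∞ ‖f(s,·)‖_{L^{q̄(·)}(ℝ^n)} ds. -/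
open MeasureTheory Set
open scoped ENNReal FourierTransform

noncomputable section

/-- Euclidean space `ℝ^n`. -/
abbrev Rn (n : ℕ) := EuclideanSpace ℝ (Fin n)

/-- Luxemburg norm of an `ℝ≥0∞`-valued function for a variable exponent `p`. -/
def luxNorm {Ω : Type*} [MeasurableSpace Ω] (μ : Measure Ω) (p : Ω → ℝ) (f : Ω → ℝ≥0∞) : ℝ≥0∞ :=
  sInf {lam : ℝ≥0∞ | 0 < lam ∧ ∫⁻ x, (f x / lam) ^ (p x) ∂μ ≤ 1}

/-- Luxemburg norm `‖f‖_{L^{p(·)}}` of a real-valued function. -/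
def luxNormR {Ω : Type*} [MeasurableSpace Ω] (μ : Measure Ω) (p : Ω → ℝ) (f : Ω → ℝ) : ℝ≥0∞ :=
  luxNorm μ p (fun x => ENNReal.ofReal |f x|)

/-- `p(·) ∈ P^log(Ω)`: measurable, with values in `[1,∞)` on `Ω`, locally log-Hölder
continuous on `Ω`, and satisfying the log-Hölder decay condition on `Ω`. -/
def IsPLog {E : Type*} [NormedAddCommGroup E] [MeasurableSpace E] (Ω : Set E) (p : E → ℝ) : Prop :=
  Measurable p ∧ (∀ x ∈ Ω, 1 ≤ p x) ∧
  ∃ C₁ > (0:ℝ), ∃ C₂ > (0:ℝ), ∃ pinf : ℝ,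
    (∀ x ∈ Ω, ∀ y ∈ Ω, x ≠ y →
      |1 / p x - 1 / p y| ≤ C₁ / Real.log (Real.exp 1 + 1 / ‖x - y‖)) ∧
    (∀ x ∈ Ω, |1 / p x - 1 / pinf| ≤ C₂ / Real.log (Real.exp 1 + ‖x‖))

/-- The fractional heat kernel `𝔤_t^α` on `ℝ^n`: the inverse Fourier transform of
`ξ ↦ exp (-t‖ξ‖^{2α})` (it is real-valued; we take the real part). -/
def gKer (n : ℕ) (α t : ℝ) (x : Rn n) : ℝ :=
  (𝓕⁻ (fun ξ : Rn n => (Real.exp (-t * ‖ξ‖ ^ (2 * α)) : ℂ)) x).re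

/-- Convolution on `ℝ^n`. -/
def conv (n : ℕ) (g f : Rn n → ℝ) (x : Rn n) : ℝ := ∫ y, g (x - y) * f y

/-- The class `P^emb_q(ℝ^n)` of variable exponents whose Lebesgue space embeds in `L^q`. -/
def IsPembq (n : ℕ) (q : ℝ) (qb : Rn n → ℝ) : Prop :=
  IsPLog univ qb ∧ q ≤ essInf qb volume ∧
  (∃ M : ℝ, ∀ᵐ x ∂(volume : Measure (Rn n)), qb x ≤ M) ∧
  Filter.Tendsto (fun x : Rn n => q * qb x / (qb x - q)) (Filter.cocompact (Rn n)) Filter.atTop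

/-- The Luxemburg-type norm of `E_T = L^{p(·)}([0,T], L^q(ℝ^n))`:
`‖u‖_{E_T} = inf {λ > 0 : ∫_0^T (‖u(t,·)‖_{L^q}/λ)^{p(t)} dt ≤ 1}`. -/
def eNormT (n : ℕ) (p : ℝ → ℝ) (q T : ℝ) (u : ℝ → Rn n → ℝ) : ℝ≥0∞ :=
  sInf {lam : ℝ≥0∞ | 0 < lam ∧
    ∫⁻ t in Ioc (0:ℝ) T, (eLpNorm (u t) (ENNReal.ofReal q) volume / lam) ^ (p t) ≤ 1}

theorem lintegral_rpow_lintegral_le {X S : Type*} [MeasurableSpace X] [MeasurableSpace S]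
    (μ : Measure X) (ν : Measure S) [SFinite μ] [SFinite ν] {q : ℝ} (hq : 1 < q)
    {F : S → X → ℝ≥0∞} (hF : Measurable (Function.uncurry F)) :
    (∫⁻ x, (∫⁻ s, F s x ∂ν) ^ q ∂μ) ^ (1 / q) ≤ ∫⁻ s, (∫⁻ x, F s x ^ q ∂μ) ^ (1 / q) ∂ν := by
  have hq0 : 0 < q := by linarith
  set w : S → ℝ≥0∞ := fun s => (∫⁻ x, F s x ^ q ∂μ) ^ (1 / q) with hw
  set W := ∫⁻ s, w s ∂ν with hW
  have hwm : Measurable w := by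
    refine Measurable.pow_const ?_ _
    exact Measurable.lintegral_prod_right' (f := fun z : S × X => F z.1 z.2 ^ q)
      (hF.pow_const q)
  have hwq : ∀ s, w s ^ q = ∫⁻ x, F s x ^ q ∂μ := fun s => by
    rw [hw]; simp only
    rw [← ENNReal.rpow_mul, one_div_mul_cancel hq0.ne', ENNReal.rpow_one]
  by_cases hWt : W = ⊤
  · rw [hWt]; exact le_top
  have hwfin : ∀ᵐ s ∂ν, w s < ⊤ := ae_lt_top hwm hWt
  set p := q.conjExponent with hp
  have hpq : q.HolderConjugate p := Real.HolderConjugate.conjExponent hq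
  have hpos : 0 < p := hpq.symm.pos
  have hqp : q * (1 / p) = q - 1 := by
    have := hpq.sub_one_mul_conj
    field_simp
    linarith
  have hzero : ∀ᵐ x ∂μ, ∀ᵐ s ∂ν, w s = 0 → F s x = 0 := by
    have hset : MeasurableSet {z : X × S | w z.2 = 0 → F z.2 z.1 = 0} := by
      have h1 : MeasurableSet {z : X × S | w z.2 = 0} :=
        (hwm.comp measurable_snd) (measurableSet_singleton 0)
      have h2 : MeasurableSet {z : X × S | F z.2 z.1 = 0} :=
        (hF.comp measurable_swap) (measurableSet_singleton 0)
      exact MeasurableSet.imp h1 h2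
    refine (Measure.ae_ae_comm (p := fun x s => w s = 0 → F s x = 0) hset).2 ?_
    refine Filter.Eventually.of_forall fun s => ?_
    by_cases h0 : w s = 0
    · have h1 : ∫⁻ x, F s x ^ q ∂μ = 0 := by rw [← hwq, h0, ENNReal.zero_rpow_of_pos hq0]
      have hm : Measurable fun x => F s x ^ q :=
        (hF.comp measurable_prodMk_left).pow_const q
      rw [lintegral_eq_zero_iff hm] at h1
      filter_upwards [h1] with x hx _
      exact (ENNReal.rpow_eq_zero_iff_of_pos hq0).1 hx
    · exact Filter.Eventually.of_forall fun x h => absurd h h0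
  have hFm : ∀ x, Measurable fun s => F s x := fun x => hF.comp measurable_prodMk_right
  have key : ∀ᵐ x ∂μ, (∫⁻ s, F s x ∂ν) ^ q ≤
      (∫⁻ s, F s x ^ q * w s ^ (-(q - 1)) ∂ν) * W ^ (q - 1) := by
    filter_upwards [hzero] with x hx
    have h1 : ∫⁻ s, F s x ∂ν ≤
        ∫⁻ s, ((fun s => F s x * w s ^ (-(1 / p))) * fun s => w s ^ (1 / p)) s ∂ν := by
      refine lintegral_mono_ae ?_
      filter_upwards [hx, hwfin] with s hs hs'
      by_cases h0 : w s = 0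
      · simp [hs h0]
      · simp only [Pi.mul_apply]
        rw [mul_assoc, ← ENNReal.rpow_add _ _ h0 hs'.ne]
        simp
    have h2 := ENNReal.lintegral_mul_le_Lp_mul_Lq ν hpq
      (f := fun s => F s x * w s ^ (-(1 / p))) (g := fun s => w s ^ (1 / p))
      ((hFm x).mul (hwm.pow_const _)).aemeasurable (hwm.pow_const _).aemeasurable
    refine (ENNReal.rpow_le_rpow (h1.trans h2) hq0.le).trans ?_
    rw [ENNReal.mul_rpow_of_nonneg _ _ hq0.le, ← ENNReal.rpow_mul, one_div_mul_cancel hq0.ne',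
      ENNReal.rpow_one, ← ENNReal.rpow_mul, mul_comm (1 / p) q, hqp]
    gcongr with s s
    · rw [ENNReal.mul_rpow_of_nonneg _ _ hq0.le, ← ENNReal.rpow_mul, neg_mul, mul_comm (1 / p) q,
        hqp]
    · rw [hW]
      refine lintegral_mono fun s => ?_
      rw [← ENNReal.rpow_mul, one_div_mul_cancel hpos.ne', ENNReal.rpow_one]
  have hprod : Measurable fun z : X × S => F z.2 z.1 ^ q * w z.2 ^ (-(q - 1)) :=
    ((hF.comp measurable_swap).pow_const q).mul ((hwm.comp measurable_snd).pow_const _)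
  have main : ∫⁻ x, (∫⁻ s, F s x ∂ν) ^ q ∂μ ≤ W ^ q := by
    calc ∫⁻ x, (∫⁻ s, F s x ∂ν) ^ q ∂μ
        ≤ ∫⁻ x, (∫⁻ s, F s x ^ q * w s ^ (-(q - 1)) ∂ν) * W ^ (q - 1) ∂μ := lintegral_mono_ae key
      _ = (∫⁻ x, ∫⁻ s, F s x ^ q * w s ^ (-(q - 1)) ∂ν ∂μ) * W ^ (q - 1) :=
          lintegral_mul_const' _ _ (ENNReal.rpow_ne_top_of_nonneg (by linarith) hWt)
      _ = (∫⁻ s, ∫⁻ x, F s x ^ q * w s ^ (-(q - 1)) ∂μ ∂ν) * W ^ (q - 1) := by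
          rw [lintegral_lintegral_swap hprod.aemeasurable]
      _ ≤ (∫⁻ s, w s ∂ν) * W ^ (q - 1) := by
          gcongr ?_ * _
          refine lintegral_mono_ae ?_
          filter_upwards [hwfin] with s hs
          have hm : Measurable fun x => F s x ^ q :=
            (hF.comp measurable_prodMk_left).pow_const q
          rw [lintegral_mul_const _ hm, ← hwq]
          by_cases h0 : w s = 0
          · simp [h0, ENNReal.zero_rpow_of_pos hq0]
          · rw [← ENNReal.rpow_add _ _ h0 hs.ne]
            simp
      _ = W ^ q := by
          rw [← hW]
          nth_rewrite 1 [← ENNReal.rpow_one W]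
          rw [← ENNReal.rpow_add_of_nonneg _ _ zero_le_one (by linarith)]
          congr 1; ring
  calc _ ≤ (W ^ q) ^ (1 / q) := ENNReal.rpow_le_rpow main (by positivity)
    _ = W := by rw [← ENNReal.rpow_mul, mul_one_div_cancel hq0.ne', ENNReal.rpow_one]

theorem mul_rpow_le_rpow_add_rpow {q b κ v : ℝ} (hq : 0 < q) (hb : q < b) (hκ : 0 < κ)
    (hv : 0 ≤ v) : (κ * v) ^ q ≤ v ^ b + κ ^ (q * b / (b - q)) := by
  have hbq : 0 < b - q := sub_pos.2 hb
  rcases le_total (κ ^ q) (v ^ (b - q)) with h | h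
  · have h1 : v ^ b = v ^ (b - q) * v ^ q := by
      rcases hv.eq_or_lt with rfl | hv'
      · rw [Real.zero_rpow (by linarith), Real.zero_rpow hq.ne', mul_zero]
      · rw [← Real.rpow_add hv']; congr 1; ring
    rw [Real.mul_rpow hκ.le hv, h1]
    have := mul_le_mul_of_nonneg_right h (Real.rpow_nonneg hv q)
    have := Real.rpow_nonneg hκ.le (q * b / (b - q))
    linarith
  · have h2 : v ≤ κ ^ (q / (b - q)) := by
      rw [← Real.rpow_le_rpow_iff hv (by positivity) hbq, ← Real.rpow_mul hκ.le,
        div_mul_cancel₀ _ hbq.ne']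
      exact h
    have h3 : (κ * v) ^ q ≤ κ ^ (q * b / (b - q)) := by
      calc (κ * v) ^ q ≤ (κ * κ ^ (q / (b - q))) ^ q := by gcongr
        _ = κ ^ (q * b / (b - q)) := by
          nth_rewrite 1 [← Real.rpow_one κ]
          rw [← Real.rpow_add hκ, ← Real.rpow_mul hκ.le]
          congr 1
          field_simp
          ring
    have := Real.rpow_nonneg hv b
    linarith

theorem IsPembq.exists_inv_sub_inv_le {n : ℕ} (hn : 1 ≤ n) {q : ℝ} (hq : 1 < q) {qb : Rn n → ℝ}
    (hqb : IsPembq n q qb) :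
    ∃ C > (0 : ℝ), ∀ x, |1 / qb x - 1 / q| ≤ C / Real.log (Real.exp 1 + ‖x‖) := by
  obtain ⟨⟨-, hone, -, -, C, hC, pinf, -, hdecay⟩, -, -, htend⟩ := hqb
  refine ⟨C, hC, ?_⟩
  have : Nonempty (Fin n) := ⟨⟨0, hn⟩⟩
  have : Filter.NeBot (Filter.cocompact (Rn n)) := inferInstance
  have h1 : Filter.Tendsto (fun x : Rn n => 1 / qb x) (Filter.cocompact (Rn n)) (nhds (1 / q)) := by
    have h2 : Filter.Tendsto (fun x : Rn n => 1 / q - (q * qb x / (qb x - q))⁻¹)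
        (Filter.cocompact (Rn n)) (nhds (1 / q - 0)) :=
      tendsto_const_nhds.sub (tendsto_inv_atTop_zero.comp htend)
    rw [sub_zero] at h2
    refine h2.congr' ?_
    filter_upwards [htend.eventually_gt_atTop 0] with x hx
    have hne : qb x - q ≠ 0 := by
      intro h; rw [h, div_zero] at hx; exact lt_irrefl _ hx
    have := hone x (mem_univ x)
    have hqb0 : qb x ≠ 0 := by positivity
    have hq0 : q ≠ 0 := by positivity
    field_simp
    ring
  have h3 : Filter.Tendsto (fun x : Rn n => 1 / qb x) (Filter.cocompact (Rn n))
      (nhds (1 / pinf)) := by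
    have hlog : Filter.Tendsto (fun x : Rn n => C / Real.log (Real.exp 1 + ‖x‖))
        (Filter.cocompact (Rn n)) (nhds 0) :=
      Filter.Tendsto.const_div_atTop (Real.tendsto_log_atTop.comp
        (Filter.tendsto_atTop_add_const_left _ _ (tendsto_norm_cocompact_atTop))) C
    rw [tendsto_iff_dist_tendsto_zero]
    refine squeeze_zero (fun _ => dist_nonneg) (fun x => ?_) hlog
    rw [Real.dist_eq]
    exact hdecay x (mem_univ x)
  rw [tendsto_nhds_unique h1 h3]
  exact fun x => hdecay x (mem_univ x)

theorem IsPembq.eLpNorm_le_luxNormR {n : ℕ} (hn : 1 ≤ n) {q : ℝ} (hq : 1 < q) {qb : Rn n → ℝ}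
    (hqb : IsPembq n q qb) :
    ∃ K : ℝ≥0∞, K ≠ ⊤ ∧ ∀ h : Rn n → ℝ,
      eLpNorm h (ENNReal.ofReal q) volume ≤ K * luxNormR volume qb h := by
  obtain ⟨C, hC, hCle⟩ := hqb.exists_inv_sub_inv_le hn hq
  obtain ⟨⟨hqbm, hone, -⟩, hess, hbdd, -⟩ := hqb
  have hq0 : 0 < q := by linarith
  have hqle : ∀ᵐ x ∂(volume : Measure (Rn n)), q ≤ qb x := by
    have h1 : ∀ᵐ x ∂(volume : Measure (Rn n)), essInf qb volume ≤ qb x :=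
      ae_essInf_le (Filter.isBoundedUnder_of ⟨1, fun x => hone x (mem_univ x)⟩)
    filter_upwards [h1] with x hx using hess.trans hx
  set κ : ℝ := Real.exp (-(C * (n + 1))) with hκ
  have hκ0 : 0 < κ := Real.exp_pos _
  have hκ1 : κ ≤ 1 := Real.exp_le_one_iff.2 (by
    have : (0:ℝ) ≤ C * (n + 1) := by positivity
    linarith)
  set wt : Rn n → ℝ := fun x => (1 + ‖x‖) ^ (-((n : ℝ) + 1)) with hwt
  have hwtm : Measurable wt := (measurable_const.add measurable_norm).pow_const _
  have hwt0 : ∀ x, 0 ≤ wt x := fun x => by positivity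
  have hwti : Integrable wt volume := integrable_one_add_norm (by simp)
  have hpt : ∀ x, q ≤ qb x → ∀ v : ℝ, 0 ≤ v → (κ * v) ^ q ≤ v ^ qb x + wt x := by
    intro x hx v hv
    rcases hx.eq_or_lt with heq | hlt
    · rw [← heq]
      have : (κ * v) ^ q ≤ v ^ q := by
        gcongr
        exact mul_le_of_le_one_left hv hκ1
      linarith [hwt0 x]
    · refine (mul_rpow_le_rpow_add_rpow hq0 hlt hκ0 hv).trans ?_
      gcongr
      have hb0 : 0 < qb x := by linarith
      have hsub : 0 < qb x - q := sub_pos.2 hlt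
      have hL : 1 ≤ Real.log (Real.exp 1 + ‖x‖) := by
        rw [Real.le_log_iff_exp_le (by positivity)]
        linarith [norm_nonneg x]
      have h1 : Real.log (Real.exp 1 + ‖x‖) ≤ C * (q * qb x / (qb x - q)) := by
        have h2 := hCle x
        rw [le_div_iff₀ (by linarith), abs_sub_comm, abs_of_nonneg
          (sub_nonneg.2 (one_div_le_one_div_of_le hq0 hx))] at h2
        have h3 : 1 / q - 1 / qb x = (q * qb x / (qb x - q))⁻¹ := by field_simp
        rw [h3] at h2
        have h4 : 0 < q * qb x / (qb x - q) := by positivity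
        rwa [inv_mul_le_iff₀ h4, mul_comm] at h2
      have h5 : Real.log (1 + ‖x‖) ≤ Real.log (Real.exp 1 + ‖x‖) :=
        Real.log_le_log (by positivity) (by linarith [Real.add_one_le_exp 1])
      simp only [hκ, hwt]
      rw [← Real.exp_mul, Real.rpow_def_of_pos (by positivity)]
      refine Real.exp_le_exp.2 ?_
      have : Real.log (1 + ‖x‖) * ((n : ℝ) + 1) ≤ C * (q * qb x / (qb x - q)) * (n + 1) := by
        gcongr
        exact h5.trans h1
      linarith
  set D : ℝ≥0∞ := ∫⁻ x, ENNReal.ofReal (wt x) with hD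
  have hDt : D ≠ ⊤ := hwti.lintegral_lt_top.ne
  set K : ℝ≥0∞ := ENNReal.ofReal κ⁻¹ * (1 + D) ^ (1 / q) with hK
  have hKt : K ≠ ⊤ := ENNReal.mul_ne_top ENNReal.ofReal_ne_top
    (ENNReal.rpow_ne_top_of_nonneg (by positivity) (by simp [hDt]))
  have hK0 : K ≠ 0 := by
    refine mul_ne_zero (by simpa using hκ0) ?_
    rw [Ne, ENNReal.rpow_eq_zero_iff_of_pos (by positivity)]
    simp
  refine ⟨K, hKt, fun h => ?_⟩
  rw [mul_comm, ← ENNReal.div_le_iff_le_mul (Or.inl hK0) (Or.inl hKt)]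
  refine le_sInf fun lam ⟨hlam0, hlam⟩ => ?_
  rw [ENNReal.div_le_iff_le_mul (Or.inl hK0) (Or.inl hKt)]
  by_cases hlt : lam = ⊤
  · rw [hlt, ENNReal.top_mul hK0]; exact le_top
  have hl0 : 0 < lam.toReal := ENNReal.toReal_pos hlam0.ne' hlt
  have hlof : ENNReal.ofReal lam.toReal = lam := ENNReal.ofReal_toReal hlt
  have hbound : ∫⁻ x, ENNReal.ofReal (κ * (|h x| / lam.toReal)) ^ q ≤ 1 + D := by
    calc ∫⁻ x, ENNReal.ofReal (κ * (|h x| / lam.toReal)) ^ q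
        ≤ ∫⁻ x, ((ENNReal.ofReal |h x| / lam) ^ qb x + ENNReal.ofReal (wt x)) := by
          refine lintegral_mono_ae ?_
          filter_upwards [hqle] with x hx
          have hv : 0 ≤ |h x| / lam.toReal := by positivity
          have hdiv : ENNReal.ofReal |h x| / lam = ENNReal.ofReal (|h x| / lam.toReal) := by
            rw [ENNReal.ofReal_div_of_pos hl0, hlof]
          rw [hdiv, ENNReal.ofReal_rpow_of_nonneg (by positivity) hq0.le,
            ENNReal.ofReal_rpow_of_nonneg hv (by linarith),
            ← ENNReal.ofReal_add (by positivity) (hwt0 x)]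
          exact ENNReal.ofReal_le_ofReal (hpt x hx _ hv)
      _ = (∫⁻ x, (ENNReal.ofReal |h x| / lam) ^ qb x) + D :=
          lintegral_add_right _ hwtm.ennreal_ofReal
      _ ≤ 1 + D := by gcongr
  have hqr : (ENNReal.ofReal q).toReal = q := ENNReal.toReal_ofReal hq0.le
  rw [eLpNorm_eq_lintegral_rpow_enorm_toReal (by simpa using hq0) ENNReal.ofReal_ne_top, hqr]
  have hsplit : ∀ x, ‖h x‖ₑ ^ q =
      (ENNReal.ofReal κ⁻¹ * lam) ^ q * ENNReal.ofReal (κ * (|h x| / lam.toReal)) ^ q := by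
    intro x
    rw [← ENNReal.mul_rpow_of_nonneg _ _ hq0.le, ← hlof,
      ← ENNReal.ofReal_mul (by positivity), ENNReal.toReal_ofReal hl0.le,
      ← ENNReal.ofReal_mul (by positivity), Real.enorm_eq_ofReal_abs]
    congr 2
    field_simp
  simp_rw [hsplit]
  rw [lintegral_const_mul' _ _ (ENNReal.rpow_ne_top_of_nonneg hq0.le
    (ENNReal.mul_ne_top ENNReal.ofReal_ne_top hlt)),
    ENNReal.mul_rpow_of_nonneg _ _ (by positivity), ← ENNReal.rpow_mul,
    mul_one_div_cancel hq0.ne', ENNReal.rpow_one]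
  calc _ ≤ ENNReal.ofReal κ⁻¹ * lam * (1 + D) ^ (1 / q) := by gcongr
    _ = lam * K := by rw [hK]; ring

theorem hasFDerivAt_comp_norm_sq {E : Type*} [NormedAddCommGroup E] [InnerProductSpace ℝ E]
    {Φ Φ' : ℝ → ℝ} {C : ℝ} (hd : ∀ r > 0, HasDerivAt Φ (Φ' r) r)
    (h0 : ∀ r ≥ 0, |Φ r| ≤ C * r) (ξ : E) :
    HasFDerivAt (fun ξ : E => Φ (‖ξ‖ ^ 2)) ((2 * Φ' (‖ξ‖ ^ 2)) • innerSL ℝ ξ) ξ := by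
  rcases eq_or_ne ξ 0 with rfl | hξ
  · have hΦ0 : Φ 0 = 0 := by simpa using h0 0 le_rfl
    have hz : (2 * Φ' (‖(0 : E)‖ ^ 2)) • innerSL ℝ (0 : E) = 0 := by simp
    rw [hz, hasFDerivAt_iff_isLittleO_nhds_zero]
    simp only [zero_add, norm_zero, ne_eq, OfNat.ofNat_ne_zero, not_false_eq_true, zero_pow, hΦ0,
      sub_zero, zero_apply]
    have h1 : (fun h : E => Φ (‖h‖ ^ 2)) =O[nhds 0] fun h : E => ‖h‖ ^ 2 := by
      refine Asymptotics.IsBigO.of_bound C (Filter.Eventually.of_forall fun h => ?_)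
      simpa using h0 (‖h‖ ^ 2) (by positivity)
    refine h1.trans_isLittleO ?_
    exact Asymptotics.isLittleO_norm_pow_id one_lt_two
  · have h1 : HasFDerivAt (fun ξ : E => ‖ξ‖ ^ 2) (2 • innerSL ℝ ξ) ξ :=
      (hasStrictFDerivAt_norm_sq ξ).hasFDerivAt
    have h2 := (hd (‖ξ‖ ^ 2) (by positivity)).comp_hasFDerivAt ξ h1
    have h3 : (2 * Φ' (‖ξ‖ ^ 2)) • innerSL ℝ ξ = Φ' (‖ξ‖ ^ 2) • (2 • innerSL ℝ ξ) := by
      rw [mul_comm, mul_smul, ofNat_smul_eq_nsmul]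
    rw [h3]
    exact h2

theorem integrable_of_le_gaussian {n : ℕ} {F : Type*} [NormedAddCommGroup F] {f : Rn n → F}
    (hf : AEStronglyMeasurable f volume) {C : ℝ}
    (hb : ∀ ξ, ‖f ξ‖ ≤ C * ((1 + ‖ξ‖ ^ 2) * Real.exp (-(‖ξ‖ ^ 2 / 2)))) : Integrable f := by
  have hC : 0 ≤ C := by
    have := (norm_nonneg _).trans (hb 0)
    simpa using this
  have hg : Integrable fun ξ : Rn n => Real.exp (-(1 / 4 : ℝ) * ‖ξ‖ ^ 2) := by
    have h := (GaussianFourier.integrable_cexp_neg_mul_sq_norm_add (V := Rn n) (b := (1 / 4 : ℂ))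
      (by norm_num) 0 0).norm
    refine h.congr (Filter.Eventually.of_forall fun ξ => ?_)
    simp only [Complex.norm_exp]
    congr 1
    simp [← Complex.ofReal_pow]
  refine (hg.const_mul (C * 4)).mono' hf (Filter.Eventually.of_forall fun ξ => (hb ξ).trans ?_)
  rw [mul_assoc]
  refine mul_le_mul_of_nonneg_left ?_ hC
  have h1 : 1 + ‖ξ‖ ^ 2 / 4 ≤ Real.exp (‖ξ‖ ^ 2 / 4) := by
    linarith [Real.add_one_le_exp (‖ξ‖ ^ 2 / 4)]
  have h2 : Real.exp (-(1 / 4 : ℝ) * ‖ξ‖ ^ 2) =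
      Real.exp (‖ξ‖ ^ 2 / 4) * Real.exp (-(‖ξ‖ ^ 2 / 2)) := by
    rw [← Real.exp_add]; congr 1; ring
  rw [h2, ← mul_assoc]
  gcongr
  nlinarith [sq_nonneg ‖ξ‖]

theorem fourier_apply_of_hasFDerivAt {n : ℕ} {f : Rn n → ℂ} {f' : Rn n → Rn n →L[ℝ] ℂ}
    (hf : ∀ ξ, HasFDerivAt f (f' ξ) ξ) (hfi : Integrable f) (hf'i : Integrable f') (x v : Rn n) :
    𝓕 (fun ξ => f' ξ v) x = (2 * Real.pi * Complex.I * inner ℝ x v) * 𝓕 f x := by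
  have hfd : fderiv ℝ f = f' := funext fun ξ => (hf ξ).fderiv
  have h1 := congrFun (Real.fourier_fderiv hfi (fun ξ => (hf ξ).differentiableAt) (hfd ▸ hf'i)) x
  rw [hfd] at h1
  have h2 := DFunLike.congr_fun h1 v
  rw [Real.fourier_continuousLinearMap_apply hf'i] at h2
  rw [h2]
  simp [VectorFourier.fourierSMulRight_apply, mul_assoc]
  exact Or.inl rfl

theorem norm_sq_mul_fourier_radial {n : ℕ} {F F₁ F₂ : ℝ → ℝ} {C : ℝ}
    (hd : ∀ r > 0, HasDerivAt F (F₁ r) r) (hd₁ : ∀ r > 0, HasDerivAt F₁ (F₂ r) r)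
    (h0 : ∀ r ≥ 0, |F r| ≤ C * r) (h0₁ : ∀ r ≥ 0, |F₁ r| ≤ C * r)
    (hb : ∀ r ≥ 0, |F r| ≤ C * Real.exp (-(r / 2)))
    (hb₁ : ∀ r ≥ 0, |F₁ r| ≤ C * Real.exp (-(r / 2)))
    (hb₂ : ∀ r ≥ 0, |F₂ r| ≤ C * Real.exp (-(r / 2))) (x : Rn n) :
    ((2 * Real.pi * ‖x‖) ^ 2 : ℝ) * 𝓕 (fun ξ : Rn n => (F (‖ξ‖ ^ 2) : ℂ)) x =
      -𝓕 (fun ξ : Rn n => ((4 * (‖ξ‖ ^ 2 * F₂ (‖ξ‖ ^ 2)) + 2 * n * F₁ (‖ξ‖ ^ 2) : ℝ) : ℂ)) x := by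
  have hC : 0 ≤ C := by simpa using (abs_nonneg _).trans (hb 0 le_rfl)
  have hn1 : ∀ ξ : Rn n, ‖ξ‖ ≤ 1 + ‖ξ‖ ^ 2 := fun ξ => by nlinarith [sq_nonneg (‖ξ‖ - 1)]
  have hD := hasFDerivAt_comp_norm_sq (E := Rn n) hd h0
  have hD₁ := hasFDerivAt_comp_norm_sq (E := Rn n) hd₁ h0₁
  set f : Rn n → ℂ := fun ξ => (F (‖ξ‖ ^ 2) : ℂ) with hf
  set f' : Rn n → Rn n →L[ℝ] ℂ := fun ξ =>
    Complex.ofRealCLM.comp ((2 * F₁ (‖ξ‖ ^ 2)) • innerSL ℝ ξ) with hf'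
  have hff' : ∀ ξ, HasFDerivAt f (f' ξ) ξ := fun ξ =>
    Complex.ofRealCLM.hasFDerivAt.comp ξ (hD ξ)
  have hfi : Integrable f := by
    have hcont : Continuous f := continuous_iff_continuousAt.2 fun ξ => (hff' ξ).continuousAt
    refine integrable_of_le_gaussian (C := C) hcont.aestronglyMeasurable fun ξ => ?_
    rw [hf, Complex.norm_real, Real.norm_eq_abs]
    refine (hb _ (by positivity)).trans ?_
    gcongr
    exact le_mul_of_one_le_left (Real.exp_pos _).le (by linarith [sq_nonneg ‖ξ‖])
  have hmeas : ∀ {g : Rn n → ℂ} {g' : Rn n → Rn n →L[ℝ] ℂ}, (∀ ξ, HasFDerivAt g (g' ξ) ξ) →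
      AEStronglyMeasurable g' volume := fun {g g'} h => by
    have : fderiv ℝ g = g' := funext fun ξ => (h ξ).fderiv
    rw [← this]
    exact (measurable_fderiv ℝ g).aestronglyMeasurable
  have hf'i : Integrable f' := by
    refine integrable_of_le_gaussian (C := 2 * C) (hmeas hff') fun ξ => ?_
    refine ContinuousLinearMap.opNorm_le_bound _ (by positivity) fun v => ?_
    have h1 := hb₁ (‖ξ‖ ^ 2) (by positivity)
    simp only [hf', ContinuousLinearMap.comp_apply, smul_apply,
      Complex.ofRealCLM_apply, Complex.norm_real, innerSL_apply_apply, smul_eq_mul, norm_mul,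
      Real.norm_eq_abs]
    calc |2| * |F₁ (‖ξ‖ ^ 2)| * |inner ℝ ξ v|
        ≤ 2 * (C * Real.exp (-(‖ξ‖ ^ 2 / 2))) * ((1 + ‖ξ‖ ^ 2) * ‖v‖) := by
          gcongr
          · simp
          · exact (abs_real_inner_le_norm ξ v).trans (by gcongr; exact hn1 ξ)
      _ = _ := by ring
  have hstep : ∀ j : Fin n, ((2 * Real.pi * Complex.I * (x j : ℂ)) ^ 2) * 𝓕 f x =
      𝓕 (fun ξ : Rn n =>
        ((4 * F₂ (‖ξ‖ ^ 2) * ξ j ^ 2 + 2 * F₁ (‖ξ‖ ^ 2) : ℝ) : ℂ)) x ∧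
      Integrable (fun ξ : Rn n =>
        ((4 * F₂ (‖ξ‖ ^ 2) * ξ j ^ 2 + 2 * F₁ (‖ξ‖ ^ 2) : ℝ) : ℂ)) := by
    intro j
    have hxj : inner ℝ x (EuclideanSpace.single j (1 : ℝ)) = x j := by
      simp [EuclideanSpace.inner_single_right]
    set e : Rn n := EuclideanSpace.single j (1 : ℝ) with he
    set P : Rn n →L[ℝ] ℝ := EuclideanSpace.proj j with hP
    have hPle : ∀ ξ : Rn n, |ξ j| ≤ ‖ξ‖ := fun ξ => PiLp.norm_apply_le ξ j
    set g : Rn n → ℂ := fun ξ => ((2 * F₁ (‖ξ‖ ^ 2) * ξ j : ℝ) : ℂ) with hg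
    set g' : Rn n → Rn n →L[ℝ] ℂ := fun ξ => Complex.ofRealCLM.comp
      ((2 * F₁ (‖ξ‖ ^ 2)) • P + (ξ j) • ((2 : ℝ) • ((2 * F₂ (‖ξ‖ ^ 2)) • innerSL ℝ ξ))) with hg'
    have hgg' : ∀ ξ, HasFDerivAt g (g' ξ) ξ := fun ξ =>
      Complex.ofRealCLM.hasFDerivAt.comp ξ (((hD₁ ξ).const_mul 2).mul P.hasFDerivAt)
    have hfe : (fun ξ => f' ξ e) = g := by
      funext ξ
      simp [hf', hg, he, EuclideanSpace.inner_single_right]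
    have hgi : Integrable g := hfe ▸ hf'i.apply_continuousLinearMap e
    have hg'i : Integrable g' := by
      refine integrable_of_le_gaussian (C := 2 * C + 4 * C) (hmeas hgg') fun ξ => ?_
      refine ContinuousLinearMap.opNorm_le_bound _ (by positivity) fun v => ?_
      have h1 := hb₁ (‖ξ‖ ^ 2) (by positivity)
      have h2 := hb₂ (‖ξ‖ ^ 2) (by positivity)
      simp only [hg', ContinuousLinearMap.comp_apply, smul_apply,
        add_apply, hP, PiLp.proj_apply,
        Complex.ofRealCLM_apply, Complex.norm_real, innerSL_apply_apply, smul_eq_mul,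
        Real.norm_eq_abs]
      refine (abs_add_le _ _).trans ?_
      simp only [abs_mul, abs_two]
      calc 2 * |F₁ (‖ξ‖ ^ 2)| * |v j| + |ξ j| * (2 * (2 * |F₂ (‖ξ‖ ^ 2)| * |inner ℝ ξ v|))
          ≤ 2 * (C * Real.exp (-(‖ξ‖ ^ 2 / 2))) * ‖v‖ +
            ‖ξ‖ * (2 * (2 * (C * Real.exp (-(‖ξ‖ ^ 2 / 2))) * (‖ξ‖ * ‖v‖))) := by
            gcongr
            · exact hPle v
            · exact hPle ξ
            · exact abs_real_inner_le_norm ξ v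
        _ = (2 * C + 4 * C * ‖ξ‖ ^ 2) * Real.exp (-(‖ξ‖ ^ 2 / 2)) * ‖v‖ := by ring
        _ ≤ ((2 * C + 4 * C) * (1 + ‖ξ‖ ^ 2)) * Real.exp (-(‖ξ‖ ^ 2 / 2)) * ‖v‖ := by
            gcongr
            nlinarith [mul_nonneg hC (sq_nonneg ‖ξ‖)]
        _ = _ := by ring
    have hge : (fun ξ => g' ξ e) = fun ξ : Rn n =>
        ((4 * F₂ (‖ξ‖ ^ 2) * ξ j ^ 2 + 2 * F₁ (‖ξ‖ ^ 2) : ℝ) : ℂ) := by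
      funext ξ
      simp only [hg', ContinuousLinearMap.comp_apply, smul_apply,
        add_apply, hP, PiLp.proj_apply,
        Complex.ofRealCLM_apply, innerSL_apply_apply, smul_eq_mul, he,
        EuclideanSpace.inner_single_right]
      congr 1
      simp
      ring
    refine ⟨?_, hge ▸ hg'i.apply_continuousLinearMap e⟩
    rw [← hge, fourier_apply_of_hasFDerivAt hgg' hgi hg'i, ← hfe,
      fourier_apply_of_hasFDerivAt hff' hfi hf'i, hxj]
    ring
  have hsum : ∑ j : Fin n, ((2 * Real.pi * Complex.I * (x j : ℂ)) ^ 2) * 𝓕 f x =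
      𝓕 (fun ξ : Rn n =>
        ((4 * (‖ξ‖ ^ 2 * F₂ (‖ξ‖ ^ 2)) + 2 * n * F₁ (‖ξ‖ ^ 2) : ℝ) : ℂ)) x := by
    rw [Finset.sum_congr rfl fun j _ => (hstep j).1]
    simp only [Real.fourier_eq]
    rw [← integral_finsetSum]
    · refine integral_congr_ae (Filter.Eventually.of_forall fun ξ => ?_)
      simp only
      rw [← Finset.smul_sum, ← Complex.ofReal_sum, Finset.sum_add_distrib, ← Finset.mul_sum,
        ← EuclideanSpace.real_norm_sq_eq]
      congr 2
      simp
      ring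
    · exact fun j _ => (Real.fourierIntegral_convergent_iff x).2 (hstep j).2
  have hx : (((2 * Real.pi * ‖x‖) ^ 2 : ℝ) : ℂ) =
      -∑ j, (2 * Real.pi * Complex.I * (x j : ℂ)) ^ 2 := by
    rw [mul_pow, EuclideanSpace.real_norm_sq_eq, Finset.mul_sum]
    push_cast
    rw [← Finset.sum_neg_distrib]
    refine Finset.sum_congr rfl fun j _ => ?_
    rw [mul_pow (2 * (Real.pi : ℂ) * Complex.I), mul_pow _ Complex.I, Complex.I_sq]
    ring
  rw [← hsum, ← Finset.sum_mul, hx]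
  ring

/-- The profile `r^a (τ r^α)^b exp (-r) exp (-τ r^α)`. -/
def radTerm (α a : ℝ) (b : ℕ) (τ r : ℝ) : ℝ :=
  r ^ a * (τ * r ^ α) ^ b * Real.exp (-r) * Real.exp (-(τ * r ^ α))

theorem hasDerivAt_radTerm (α a : ℝ) (b : ℕ) (τ : ℝ) {r : ℝ} (hr : 0 < r) :
    HasDerivAt (radTerm α a b τ)
      ((a + α * b) * radTerm α (a - 1) b τ r + (-1) * radTerm α a b τ r
        + (-α) * radTerm α (a - 1) (b + 1) τ r) r := by
  have h1 : HasDerivAt (fun r : ℝ => r ^ a) (a * r ^ (a - 1)) r :=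
    Real.hasDerivAt_rpow_const (Or.inl hr.ne')
  have hz : HasDerivAt (fun r : ℝ => τ * r ^ α) (τ * (α * r ^ (α - 1))) r :=
    (Real.hasDerivAt_rpow_const (Or.inl hr.ne')).const_mul τ
  have h2 := hz.pow b
  have h3 : HasDerivAt (fun r : ℝ => Real.exp (-r)) (Real.exp (-r) * (-1)) r :=
    (hasDerivAt_neg r).exp
  have h4 := hz.neg.exp
  refine (((h1.mul h2).mul h3).mul h4).congr_deriv ?_
  simp only [radTerm, Pi.mul_apply, Pi.pow_apply, Pi.neg_apply]
  have ha : r ^ a = r ^ (a - 1) * r := by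
    rw [Real.rpow_sub_one hr.ne', div_mul_cancel₀ _ hr.ne']
  have hα : r ^ (α - 1) = r ^ α / r := Real.rpow_sub_one hr.ne' α
  rw [ha, hα]
  rcases b with _ | b
  · field_simp
    push_cast
    ring
  · rw [Nat.add_sub_cancel]
    field_simp
    push_cast
    ring

theorem exists_rpow_mul_exp_le {c : ℝ} (hc : 0 ≤ c) :
    ∃ C : ℝ, 0 ≤ C ∧ ∀ r ≥ 0, r ^ c * Real.exp (-r) ≤ C * Real.exp (-(r / 2)) := by
  rcases hc.eq_or_lt with rfl | hc'
  · refine ⟨1, zero_le_one, fun r hr => ?_⟩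
    rw [Real.rpow_zero]
    gcongr
    linarith
  · refine ⟨(2 * c) ^ c, by positivity, fun r hr => ?_⟩
    have h1 : r ≤ 2 * c * Real.exp (r / (2 * c)) := by
      have h2 : r / (2 * c) ≤ Real.exp (r / (2 * c)) := by
        linarith [Real.add_one_le_exp (r / (2 * c))]
      rwa [div_le_iff₀' (by positivity)] at h2
    have h3 : r ^ c ≤ (2 * c) ^ c * Real.exp (r / 2) := by
      calc r ^ c ≤ (2 * c * Real.exp (r / (2 * c))) ^ c := by gcongr
        _ = (2 * c) ^ c * Real.exp (r / 2) := by
          rw [Real.mul_rpow (by positivity) (by positivity), ← Real.exp_mul]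
          congr 2
          field_simp
    calc r ^ c * Real.exp (-r) ≤ (2 * c) ^ c * Real.exp (r / 2) * Real.exp (-r) := by gcongr
      _ = _ := by rw [mul_assoc, ← Real.exp_add]; congr 2; ring

theorem radTerm_nonneg (α a : ℝ) (b : ℕ) {τ r : ℝ} (hτ : 0 ≤ τ) (hr : 0 ≤ r) :
    0 ≤ radTerm α a b τ r := by
  unfold radTerm; positivity

theorem radTerm_le (α a : ℝ) (b : ℕ) {τ r : ℝ} (hτ : 0 ≤ τ) (hr : 0 ≤ r) :
    radTerm α a b τ r ≤ (b.factorial : ℝ) * (r ^ a * Real.exp (-r)) := by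
  have hz : 0 ≤ τ * r ^ α := by positivity
  have h1 : (τ * r ^ α) ^ b * Real.exp (-(τ * r ^ α)) ≤ b.factorial := by
    have h2 := Real.pow_div_factorial_le_exp _ hz b
    rw [div_le_iff₀ (by positivity)] at h2
    rw [Real.exp_neg, ← div_eq_mul_inv, div_le_iff₀ (Real.exp_pos _)]
    linarith [h2]
  calc radTerm α a b τ r
      = ((τ * r ^ α) ^ b * Real.exp (-(τ * r ^ α))) * (r ^ a * Real.exp (-r)) := by
        unfold radTerm; ring
    _ ≤ _ := by gcongr

/-- Families `τ ↦ F τ` of radial profiles spanned by the `radTerm α a b` with `a ≥ c`. -/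
inductive IsRad (α c : ℝ) : (ℝ → ℝ → ℝ) → Prop
  | term (a : ℝ) (b : ℕ) (h : c ≤ a) : IsRad α c (fun τ r => radTerm α a b τ r)
  | add {F G : ℝ → ℝ → ℝ} (hF : IsRad α c F) (hG : IsRad α c G) :
      IsRad α c (fun τ r => F τ r + G τ r)
  | smul (k : ℝ) {F : ℝ → ℝ → ℝ} (hF : IsRad α c F) : IsRad α c (fun τ r => k * F τ r)

namespace IsRad

variable {α c : ℝ} {F : ℝ → ℝ → ℝ}

theorem exists_deriv (hF : IsRad α c F) :
    ∃ F₁, IsRad α (c - 1) F₁ ∧ ∀ τ, ∀ r > 0, HasDerivAt (F τ) (F₁ τ r) r := by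
  induction hF with
  | term a b h =>
    exact ⟨_, ((((term (a - 1) b (by linarith)).smul _).add
      ((term a b (by linarith)).smul _)).add ((term (a - 1) (b + 1) (by linarith)).smul _)),
      fun τ r hr => hasDerivAt_radTerm α a b τ hr⟩
  | add _ _ ihF ihG =>
    obtain ⟨F₁, h1, h2⟩ := ihF
    obtain ⟨G₁, h3, h4⟩ := ihG
    exact ⟨_, h1.add h3, fun τ r hr => (h2 τ r hr).add (h4 τ r hr)⟩
  | smul k _ ih =>
    obtain ⟨F₁, h1, h2⟩ := ih
    exact ⟨_, h1.smul k, fun τ r hr => (h2 τ r hr).const_mul k⟩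

theorem mono {d : ℝ} (hF : IsRad α c F) (hd : d ≤ c) : IsRad α d F := by
  induction hF with
  | term a b h => exact term a b (hd.trans h)
  | add _ _ ihF ihG => exact ihF.add ihG
  | smul k _ ih => exact ih.smul k

theorem exists_id_mul (hF : IsRad α c F) (hc : 0 ≤ c) :
    ∃ G, IsRad α (c + 1) G ∧ ∀ τ, ∀ r ≥ 0, r * F τ r = G τ r := by
  induction hF with
  | term a b h =>
    refine ⟨_, term (a + 1) b (by linarith), fun τ r hr => ?_⟩
    unfold radTerm
    rw [Real.rpow_add_one' hr (by linarith)]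
    ring
  | add _ _ ihF ihG =>
    obtain ⟨F₁, h1, h2⟩ := ihF
    obtain ⟨G₁, h3, h4⟩ := ihG
    exact ⟨_, h1.add h3, fun τ r hr => by rw [mul_add, h2 τ r hr, h4 τ r hr]⟩
  | smul k _ ih =>
    obtain ⟨F₁, h1, h2⟩ := ih
    exact ⟨_, h1.smul k, fun τ r hr => by rw [← h2 τ r hr]; ring⟩

theorem measurable (hF : IsRad α c F) (τ : ℝ) : Measurable (F τ) := by
  induction hF with
  | term a b h => unfold radTerm; fun_prop
  | add _ _ ihF ihG => exact ihF.add ihG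
  | smul k _ ih => exact ih.const_mul k

theorem exists_bound (hF : IsRad α c F) {d : ℝ} (hd : 0 ≤ d) (hdc : d ≤ c) :
    ∃ C : ℝ, 0 ≤ C ∧ ∀ τ ≥ 0, ∀ r ≥ 0, |F τ r| ≤ C * (r ^ d * Real.exp (-(r / 2))) := by
  induction hF with
  | term a b h =>
    obtain ⟨C, hC, hCle⟩ := exists_rpow_mul_exp_le (c := a - d) (by linarith)
    refine ⟨b.factorial * C, by positivity, fun τ hτ r hr => ?_⟩
    rw [abs_of_nonneg (radTerm_nonneg α a b hτ hr)]
    refine (radTerm_le α a b hτ hr).trans ?_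
    rw [mul_assoc]
    refine mul_le_mul_of_nonneg_left ?_ (by positivity)
    have h1 : r ^ a = r ^ d * r ^ (a - d) := by
      rw [← Real.rpow_add_of_nonneg hr hd (by linarith)]; congr 1; ring
    rw [h1, mul_assoc, mul_left_comm]
    have := mul_le_mul_of_nonneg_left (hCle r hr) (Real.rpow_nonneg hr d)
    linarith
  | add _ _ ihF ihG =>
    obtain ⟨C, hC, h1⟩ := ihF
    obtain ⟨D, hD, h2⟩ := ihG
    refine ⟨C + D, by positivity, fun τ hτ r hr => (abs_add_le _ _).trans ?_⟩
    rw [add_mul]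
    exact add_le_add (h1 τ hτ r hr) (h2 τ hτ r hr)
  | smul k _ ih =>
    obtain ⟨C, hC, h1⟩ := ih
    refine ⟨|k| * C, by positivity, fun τ hτ r hr => ?_⟩
    rw [abs_mul, mul_assoc]
    gcongr
    exact h1 τ hτ r hr

theorem exists_fourier_bound {n : ℕ} (m : ℕ) :
    ∀ {F : ℝ → ℝ → ℝ} {c : ℝ}, (m : ℝ) + 1 ≤ c → IsRad α c F →
      ∃ C : ℝ, ∀ τ ≥ 0, ∀ x : Rn n,
        ‖x‖ ^ (2 * m) * ‖𝓕 (fun ξ : Rn n => (F τ (‖ξ‖ ^ 2) : ℂ)) x‖ ≤ C := by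
  induction m with
  | zero =>
    intro F c hc hF
    obtain ⟨C, hC, hb⟩ := hF.exists_bound le_rfl (by norm_num at hc; linarith)
    have hint : Integrable fun ξ : Rn n => C * ((1 + ‖ξ‖ ^ 2) * Real.exp (-(‖ξ‖ ^ 2 / 2))) :=
      integrable_of_le_gaussian (C := C) (by fun_prop) fun ξ => by
        rw [Real.norm_of_nonneg (by positivity)]
    refine ⟨∫ ξ : Rn n, C * ((1 + ‖ξ‖ ^ 2) * Real.exp (-(‖ξ‖ ^ 2 / 2))), fun τ hτ x => ?_⟩
    rw [mul_zero, pow_zero, one_mul]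
    refine (VectorFourier.norm_fourierIntegral_le_integral_norm _ _ _ _ _).trans ?_
    refine integral_mono_of_nonneg (Filter.Eventually.of_forall fun _ => norm_nonneg _) hint
      (Filter.Eventually.of_forall fun ξ => ?_)
    simp only [Complex.norm_real, Real.norm_eq_abs]
    refine (hb τ hτ _ (by positivity)).trans ?_
    rw [Real.rpow_zero]
    gcongr
    linarith [sq_nonneg ‖ξ‖]
  | succ m ih =>
    intro F c hc hF
    have hm : (0 : ℝ) ≤ m := Nat.cast_nonneg m
    push_cast at hc
    obtain ⟨F₁, hF₁, hd⟩ := hF.exists_deriv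
    obtain ⟨F₂, hF₂, hd₁⟩ := hF₁.exists_deriv
    obtain ⟨G, hG, hFG⟩ := hF₂.exists_id_mul (by linarith)
    have hL : IsRad α (c - 1) fun τ r => 4 * G τ r + 2 * n * F₁ τ r :=
      ((hG.smul 4).mono (by linarith)).add (hF₁.smul (2 * n))
    obtain ⟨K, hK⟩ := ih (by linarith) hL
    obtain ⟨B₀, hB₀, hb₀⟩ := hF.exists_bound le_rfl (by linarith)
    obtain ⟨B₁, hB₁, hb₁⟩ := hF₁.exists_bound le_rfl (by linarith)
    obtain ⟨B₂, hB₂, hb₂⟩ := hF₂.exists_bound le_rfl (by linarith)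
    obtain ⟨A₀, hA₀, ha₀⟩ := hF.exists_bound zero_le_one (by linarith)
    obtain ⟨A₁, hA₁, ha₁⟩ := hF₁.exists_bound zero_le_one (by linarith)
    set C := B₀ + B₁ + B₂ + A₀ + A₁ with hC
    have hexp : ∀ {f : ℝ → ℝ} {B : ℝ}, B ≤ C →
        (∀ r ≥ 0, |f r| ≤ B * (r ^ (0 : ℝ) * Real.exp (-(r / 2)))) →
        ∀ r ≥ 0, |f r| ≤ C * Real.exp (-(r / 2)) := fun hBC h r hr => by
      refine (h r hr).trans ?_
      rw [Real.rpow_zero, one_mul]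
      gcongr
    have hlin : ∀ {f : ℝ → ℝ} {B : ℝ}, 0 ≤ B → B ≤ C →
        (∀ r ≥ 0, |f r| ≤ B * (r ^ (1 : ℝ) * Real.exp (-(r / 2)))) →
        ∀ r ≥ 0, |f r| ≤ C * r := fun hB hBC h r hr => by
      refine (h r hr).trans ?_
      rw [Real.rpow_one]
      have : Real.exp (-(r / 2)) ≤ 1 := Real.exp_le_one_iff.2 (by linarith)
      gcongr
      exact mul_le_of_le_one_right hr this
    refine ⟨K, fun τ hτ x => ?_⟩
    have h1 := norm_sq_mul_fourier_radial (hd τ) (hd₁ τ) (C := C)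
      (hlin hA₀ (by linarith) (ha₀ τ hτ)) (hlin hA₁ (by linarith) (ha₁ τ hτ))
      (hexp (by linarith) (hb₀ τ hτ)) (hexp (by linarith) (hb₁ τ hτ))
      (hexp (by linarith) (hb₂ τ hτ)) x
    have h2 := congrArg norm h1
    rw [norm_neg, norm_mul, Complex.norm_real, Real.norm_of_nonneg (by positivity)] at h2
    have h3 : ‖x‖ ^ 2 ≤ (2 * Real.pi * ‖x‖) ^ 2 := by
      gcongr
      have := Real.pi_gt_three
      nlinarith [norm_nonneg x]
    have h4 : (fun ξ : Rn n =>
        ((4 * (‖ξ‖ ^ 2 * F₂ τ (‖ξ‖ ^ 2)) + 2 * n * F₁ τ (‖ξ‖ ^ 2) : ℝ) : ℂ)) =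
        fun ξ : Rn n => ((4 * G τ (‖ξ‖ ^ 2) + 2 * n * F₁ τ (‖ξ‖ ^ 2) : ℝ) : ℂ) := by
      funext ξ
      rw [hFG τ _ (by positivity)]
    rw [h4] at h2
    calc ‖x‖ ^ (2 * (m + 1)) * ‖𝓕 (fun ξ : Rn n => (F τ (‖ξ‖ ^ 2) : ℂ)) x‖
        = ‖x‖ ^ (2 * m) * (‖x‖ ^ 2 * ‖𝓕 (fun ξ : Rn n => (F τ (‖ξ‖ ^ 2) : ℂ)) x‖) := by ring
      _ ≤ ‖x‖ ^ (2 * m) * ((2 * Real.pi * ‖x‖) ^ 2 *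
          ‖𝓕 (fun ξ : Rn n => (F τ (‖ξ‖ ^ 2) : ℂ)) x‖) := by gcongr
      _ ≤ K := by rw [h2]; exact hK τ hτ x

end IsRad

theorem exists_lintegral_fourier_radTerm_le {n : ℕ} (hn : 1 ≤ n) (α : ℝ) {a : ℝ} (b : ℕ)
    (ha : (n : ℝ) + 1 ≤ a) :
    ∃ C : ℝ≥0∞, C ≠ ⊤ ∧ ∀ τ ≥ 0,
      ∫⁻ x : Rn n, ‖𝓕 (fun ξ : Rn n => (radTerm α a b τ (‖ξ‖ ^ 2) : ℂ)) x‖ₑ ≤ C := by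
  have hR : IsRad α a fun τ r => radTerm α a b τ r := IsRad.term a b le_rfl
  obtain ⟨C₀, h0⟩ := IsRad.exists_fourier_bound (n := n) 0
    (by have : (0:ℝ) ≤ n := Nat.cast_nonneg n
        push_cast; linarith) hR
  obtain ⟨C₁, h1⟩ := IsRad.exists_fourier_bound (n := n) n ha hR
  have hint : Integrable fun x : Rn n => (1 + ‖x‖) ^ (-(2 * n : ℝ)) := by
    refine integrable_one_add_norm ?_
    have : (1:ℝ) ≤ n := by exact_mod_cast hn
    simp
    linarith
  refine ⟨∫⁻ x : Rn n, ENNReal.ofReal (2 ^ (2 * n - 1) * (C₀ + C₁) * (1 + ‖x‖) ^ (-(2 * n : ℝ))),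
    (hint.const_mul _).lintegral_lt_top.ne, fun τ hτ => lintegral_mono fun x => ?_⟩
  rw [← ofReal_norm]
  refine ENNReal.ofReal_le_ofReal ?_
  have h2 := h0 τ hτ x
  have h3 := h1 τ hτ x
  rw [mul_zero, pow_zero, one_mul] at h2
  have h4 : (1 + ‖x‖) ^ (2 * n) ≤ 2 ^ (2 * n - 1) * (1 ^ (2 * n) + ‖x‖ ^ (2 * n)) :=
    add_pow_le zero_le_one (norm_nonneg x) _
  have hpos : (0:ℝ) < (1 + ‖x‖) ^ (2 * n) := by positivity
  have h5 : (1 + ‖x‖) ^ (-(2 * n : ℝ)) = ((1 + ‖x‖) ^ (2 * n))⁻¹ := by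
    rw [Real.rpow_neg (by positivity), ← Real.rpow_natCast]
    push_cast
    rfl
  rw [h5, ← div_eq_mul_inv, le_div_iff₀ hpos, mul_comm]
  calc _ ≤ 2 ^ (2 * n - 1) * (1 ^ (2 * n) + ‖x‖ ^ (2 * n)) * _ := by
        gcongr
    _ = 2 ^ (2 * n - 1) * (‖𝓕 (fun ξ : Rn n => (radTerm α a b τ (‖ξ‖ ^ 2) : ℂ)) x‖ +
        ‖x‖ ^ (2 * n) * ‖𝓕 (fun ξ : Rn n => (radTerm α a b τ (‖ξ‖ ^ 2) : ℂ)) x‖) := by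
        rw [one_pow]; ring
    _ ≤ _ := by gcongr

theorem lintegral_comp_smul {n : ℕ} (h : Rn n → ℝ≥0∞) {c : ℝ} (hc : c ≠ 0) :
    ∫⁻ x, h (c • x) = ENNReal.ofReal |(c ^ n)⁻¹| * ∫⁻ x, h x := by
  have h1 := (measurableEmbedding_const_smul₀ (α := Rn n) hc).lintegral_map (μ := volume) h
  rw [← h1, Measure.map_addHaar_smul _ hc, lintegral_smul_measure, smul_eq_mul]
  simp

theorem fourier_comp_smul {n : ℕ} (f : Rn n → ℂ) {c : ℝ} (hc : c ≠ 0) (x : Rn n) :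
    𝓕 (fun ξ => f (c • ξ)) x = |(c ^ n)⁻¹| • 𝓕 f (c⁻¹ • x) := by
  have h1 := Measure.integral_comp_smul (volume : Measure (Rn n))
    (fun ξ => Real.fourierChar (-inner ℝ ξ (c⁻¹ • x)) • f ξ) c
  rw [Real.fourier_eq, Real.fourier_eq]
  simp only [finrank_euclideanSpace, Fintype.card_fin] at h1
  rw [← h1]
  refine integral_congr_ae (Filter.Eventually.of_forall fun ξ => ?_)
  simp only [real_inner_smul_left, real_inner_smul_right]
  rw [inv_mul_cancel_left₀ hc]

theorem lintegral_fourier_comp_smul {n : ℕ} (f : Rn n → ℂ) {c : ℝ} (hc : c ≠ 0) :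
    ∫⁻ x, ‖𝓕 (fun ξ => f (c • ξ)) x‖ₑ = ∫⁻ x, ‖𝓕 f x‖ₑ := by
  simp only [fourier_comp_smul f hc, enorm_smul]
  rw [lintegral_const_mul' _ _ enorm_ne_top,
    lintegral_comp_smul (fun x => ‖𝓕 f x‖ₑ) (inv_ne_zero hc), ← mul_assoc]
  rw [← ofReal_norm, ← ENNReal.ofReal_mul (norm_nonneg _), Real.norm_eq_abs, abs_abs,
    ← abs_mul, inv_pow, inv_inv, inv_mul_cancel₀ (pow_ne_zero _ hc)]
  simp

theorem fourier_const_mul {n : ℕ} (f : Rn n → ℂ) (k : ℂ) (x : Rn n) :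
    𝓕 (fun ξ => k * f ξ) x = k * 𝓕 f x := by
  rw [Real.fourier_eq, Real.fourier_eq, ← integral_const_mul]
  refine integral_congr_ae (Filter.Eventually.of_forall fun ξ => ?_)
  simp only [Circle.smul_def, smul_eq_mul]
  ring

theorem lintegral_fourier_radial_scale {n : ℕ} (P : ℝ → ℝ) (k : ℝ) {s : ℝ} (hs : 0 < s) :
    ∫⁻ x : Rn n, ‖𝓕 (fun ξ : Rn n => ((k * P (s * ‖ξ‖ ^ 2) : ℝ) : ℂ)) x‖ₑ =
      ‖k‖ₑ * ∫⁻ x : Rn n, ‖𝓕 (fun ξ : Rn n => (P (‖ξ‖ ^ 2) : ℂ)) x‖ₑ := by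
  rw [← lintegral_fourier_comp_smul (fun ξ : Rn n => (P (‖ξ‖ ^ 2) : ℂ)) (Real.sqrt_pos.2 hs).ne',
    ← lintegral_const_mul' _ _ enorm_ne_top]
  refine lintegral_congr fun x => ?_
  simp only [Complex.ofReal_mul]
  rw [fourier_const_mul, enorm_mul]
  simp only [norm_smul, mul_pow, Real.norm_eq_abs, sq_abs, Real.sq_sqrt hs.le]
  congr 1
  simp [← ofReal_norm]

/-- Integrable functions whose Fourier transform is integrable. -/
def HasIntegrableFourier {n : ℕ} (f : Rn n → ℂ) : Prop :=
  Integrable f ∧ Integrable (𝓕 f)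

theorem measurable_fourier_uncurry {n : ℕ} {Y : Type*} [MeasurableSpace Y] {Φ : Y → Rn n → ℂ}
    (hΦ : Measurable (Function.uncurry Φ)) :
    Measurable (Function.uncurry fun y x => 𝓕 (Φ y) x) := by
  have : StronglyMeasurable (Function.uncurry fun (z : Y × Rn n) (v : Rn n) =>
      Real.fourierChar (-inner ℝ v z.2) • Φ z.1 v) := by
    refine Measurable.stronglyMeasurable ?_
    have h1 : Measurable fun w : (Y × Rn n) × Rn n => Φ w.1.1 w.2 :=
      hΦ.comp (by fun_prop : Measurable fun w : (Y × Rn n) × Rn n => (w.1.1, w.2))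
    have h2 : Measurable fun w : (Y × Rn n) × Rn n =>
        (Real.fourierChar (-inner ℝ w.2 w.1.2) : ℂ) := by
      have : Continuous fun u : ℝ => (Real.fourierChar u : ℂ) := by fun_prop
      exact this.measurable.comp (by fun_prop)
    exact h2.mul h1
  exact (this.integral_prod_right (ν := (volume : Measure (Rn n)))).measurable

theorem lintegral_fourier_integral_le {n : ℕ} {Y : Type*} [MeasurableSpace Y] {ν : Measure Y}
    [SFinite ν] {Φ : Y → Rn n → ℂ} (hΦ : Measurable (Function.uncurry Φ))
    (hi : Integrable (Function.uncurry Φ) (ν.prod volume)) :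
    ∫⁻ x, ‖𝓕 (fun ξ => ∫ y, Φ y ξ ∂ν) x‖ₑ ≤ ∫⁻ y, (∫⁻ x, ‖𝓕 (Φ y) x‖ₑ) ∂ν := by
  have hm := measurable_fourier_uncurry hΦ
  have h1 : ∀ x, 𝓕 (fun ξ => ∫ y, Φ y ξ ∂ν) x = ∫ y, 𝓕 (Φ y) x ∂ν := fun x => by
    simp only [Real.fourier_eq]
    rw [integral_integral_swap]
    · refine integral_congr_ae (Filter.Eventually.of_forall fun ξ => ?_)
      simp only [Circle.smul_def]
      rw [integral_smul]
    · refine Integrable.mono hi ?_ (Filter.Eventually.of_forall fun z => ?_)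
      · have h2 : Measurable fun w : Y × Rn n => (Real.fourierChar (-inner ℝ w.2 x) : ℂ) := by
          have : Continuous fun u : ℝ => (Real.fourierChar u : ℂ) := by fun_prop
          exact this.measurable.comp (by fun_prop)
        exact (h2.mul hΦ).aestronglyMeasurable
      · simp [Function.uncurry]
  rw [lintegral_lintegral_swap hm.enorm.aemeasurable]
  refine lintegral_mono fun x => ?_
  rw [h1]
  exact enorm_integral_le_lintegral_enorm _

namespace HasIntegrableFourier

variable {n : ℕ} {f g : Rn n → ℂ}

theorem of_lintegral_lt_top (hf : Integrable f) (h : ∫⁻ x, ‖𝓕 f x‖ₑ < ⊤) :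
    HasIntegrableFourier f := by
  refine ⟨hf, Continuous.aestronglyMeasurable ?_, h⟩
  exact VectorFourier.fourierIntegral_continuous Real.continuous_fourierChar
    (L := innerₗ (Rn n)) continuous_inner hf

theorem add (hf : HasIntegrableFourier f) (hg : HasIntegrableFourier g) :
    HasIntegrableFourier fun ξ => f ξ + g ξ := by
  refine ⟨hf.1.add hg.1, (hf.2.add hg.2).congr (Filter.Eventually.of_forall fun x => ?_)⟩
  simp only [Real.fourier_eq, Pi.add_apply, smul_add]
  rw [integral_add ((Real.fourierIntegral_convergent_iff x).2 hf.1)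
    ((Real.fourierIntegral_convergent_iff x).2 hg.1)]

theorem const_mul (hf : HasIntegrableFourier f) (k : ℂ) :
    HasIntegrableFourier fun ξ => k * f ξ :=
  ⟨hf.1.const_mul k, (hf.2.const_mul k).congr
    (Filter.Eventually.of_forall fun x => (fourier_const_mul f k x).symm)⟩

theorem sub (hf : HasIntegrableFourier f) (hg : HasIntegrableFourier g) :
    HasIntegrableFourier fun ξ => f ξ - g ξ := by
  have := hf.add (hg.const_mul (-1))
  simpa [sub_eq_add_neg] using this

theorem congr_ae (hf : HasIntegrableFourier f) (h : f =ᵐ[volume] g) :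
    HasIntegrableFourier g := by
  refine ⟨hf.1.congr h, ?_⟩
  have : 𝓕 f = 𝓕 g := by
    funext x
    simp only [Real.fourier_eq]
    exact integral_congr_ae (h.mono fun ξ hξ => by simp only [hξ])
  exact this ▸ hf.2

theorem integral {Y : Type*} [MeasurableSpace Y] {ν : Measure Y}
    [SFinite ν] {Φ : Y → Rn n → ℂ} (hΦ : Measurable (Function.uncurry Φ))
    (hi : Integrable (Function.uncurry Φ) (ν.prod volume))
    (hw : ∫⁻ y, (∫⁻ x, ‖𝓕 (Φ y) x‖ₑ) ∂ν < ⊤) :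
    HasIntegrableFourier fun ξ => ∫ y, Φ y ξ ∂ν :=
  of_lintegral_lt_top hi.integral_prod_right ((lintegral_fourier_integral_le hΦ hi).trans_lt hw)

end HasIntegrableFourier

theorem integrable_rpow_mul_exp_neg_rpow {n : ℕ} {α k : ℝ} (hα : 0 < α) (hk : 0 ≤ k) :
    Integrable fun ξ : Rn n => (‖ξ‖ ^ 2) ^ k * Real.exp (-((‖ξ‖ ^ 2) ^ α)) := by
  obtain ⟨b, hb⟩ := exists_nat_ge ((k + (n + 1)) / α)
  rw [div_le_iff₀ hα] at hb
  have hint : Integrable fun ξ : Rn n =>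
      2 ^ ((n : ℝ) + 1) * (1 + b.factorial : ℝ) * (1 + ‖ξ‖ ^ 2) ^ (-(2 * ((n : ℝ) + 1)) / 2) := by
    refine (integrable_rpow_neg_one_add_norm_sq ?_).const_mul _
    have : (0 : ℝ) ≤ n := Nat.cast_nonneg n
    simp
    linarith
  refine hint.mono' (by fun_prop) (Filter.Eventually.of_forall fun ξ => ?_)
  set r := ‖ξ‖ ^ 2
  have hr : 0 ≤ r := by positivity
  rw [Real.norm_of_nonneg (by positivity)]
  have he : -(2 * ((n : ℝ) + 1)) / 2 = -((n : ℝ) + 1) := by ring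
  rw [he, Real.rpow_neg (by positivity), ← div_eq_mul_inv, le_div_iff₀ (by positivity)]
  have hE : Real.exp (-(r ^ α)) ≤ 1 := Real.exp_le_one_iff.2 (by simp; positivity)
  rcases le_total r 1 with h1 | h1
  · calc r ^ k * Real.exp (-(r ^ α)) * (1 + r) ^ ((n : ℝ) + 1)
        ≤ 1 * 1 * 2 ^ ((n : ℝ) + 1) := by
          gcongr
          · exact Real.rpow_le_one hr h1 hk
          · linarith
      _ = 2 ^ ((n : ℝ) + 1) * 1 := by ring
      _ ≤ _ := by gcongr; simp
  · have h2 : r ^ (k + (n + 1)) * Real.exp (-(r ^ α)) ≤ b.factorial := by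
      have h3 := Real.pow_div_factorial_le_exp (r ^ α) (by positivity) b
      rw [div_le_iff₀ (by positivity), ← Real.rpow_natCast, ← Real.rpow_mul hr] at h3
      have h4 : r ^ (k + (n + 1)) ≤ r ^ (α * b) :=
        Real.rpow_le_rpow_of_exponent_le h1 (by linarith)
      rw [Real.exp_neg, ← div_eq_mul_inv, div_le_iff₀ (Real.exp_pos _)]
      linarith
    calc r ^ k * Real.exp (-(r ^ α)) * (1 + r) ^ ((n : ℝ) + 1)
        ≤ r ^ k * Real.exp (-(r ^ α)) * (2 * r) ^ ((n : ℝ) + 1) := by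
          gcongr
          linarith
      _ = 2 ^ ((n : ℝ) + 1) * (r ^ (k + (n + 1)) * Real.exp (-(r ^ α))) := by
          rw [Real.mul_rpow zero_le_two hr, Real.rpow_add_of_nonneg hr hk (by positivity)]
          ring
      _ ≤ 2 ^ ((n : ℝ) + 1) * (1 + b.factorial) := by
          gcongr
          linarith
      _ = _ := by ring

theorem integrable_const_mul_exp_neg_half_norm_sq {n : ℕ} {C : ℝ} :
    Integrable fun ξ : Rn n => C * Real.exp (-(‖ξ‖ ^ 2 / 2)) := by
  refine Integrable.const_mul ?_ _
  refine integrable_of_le_gaussian (C := 1) (by fun_prop) fun ξ => ?_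
  rw [Real.norm_of_nonneg (by positivity), one_mul]
  exact le_mul_of_one_le_left (Real.exp_pos _).le (by linarith [sq_nonneg ‖ξ‖])

/-- The profile `r^k exp (-r) (1 - exp (-τ r^α))`. -/
def radDiff (α k τ r : ℝ) : ℝ :=
  r ^ k * Real.exp (-r) * (1 - Real.exp (-(τ * r ^ α)))

theorem integral_mul_radTerm {α k τ r : ℝ} (hα : 0 < α) (hk : 0 ≤ k) (hr : 0 ≤ r) :
    ∫ σ in Ioc (0 : ℝ) 1, τ * radTerm α (k + α) 0 (σ * τ) r = radDiff α k τ r := by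
  rw [← intervalIntegral.integral_of_le zero_le_one]
  have hd : ∀ σ ∈ uIcc (0 : ℝ) 1, HasDerivAt
      (fun σ : ℝ => -(r ^ k * Real.exp (-r) * Real.exp (-(σ * τ * r ^ α))))
      (τ * radTerm α (k + α) 0 (σ * τ) r) σ := fun σ _ => by
    have h1 : HasDerivAt (fun σ : ℝ => -(σ * τ * r ^ α)) (-(1 * τ * r ^ α)) σ :=
      (((hasDerivAt_id σ).mul_const τ).mul_const (r ^ α)).neg
    refine ((h1.exp.const_mul (r ^ k * Real.exp (-r))).neg).congr_deriv ?_
    rw [radTerm, Real.rpow_add_of_nonneg hr hk hα.le]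
    ring
  rw [intervalIntegral.integral_eq_sub_of_hasDerivAt hd]
  · simp [radDiff]
    ring
  · refine Continuous.intervalIntegrable ?_ _ _
    unfold radTerm
    fun_prop

theorem exists_lintegral_fourier_radDiff_le {n : ℕ} (hn : 1 ≤ n) {α k : ℝ} (hα : 0 < α)
    (hk : (n : ℝ) + 1 ≤ k) :
    ∃ C : ℝ≥0∞, C ≠ ⊤ ∧ ∀ τ ≥ 0,
      ∫⁻ x : Rn n, ‖𝓕 (fun ξ : Rn n => (radDiff α k τ (‖ξ‖ ^ 2) : ℂ)) x‖ₑ ≤ ‖τ‖ₑ * C := by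
  have hk0 : 0 ≤ k := by
    have : (0 : ℝ) ≤ n := Nat.cast_nonneg n
    linarith
  obtain ⟨C, hC, hle⟩ := exists_lintegral_fourier_radTerm_le hn α (a := k + α) 0 (by linarith)
  refine ⟨C, hC, fun τ hτ => ?_⟩
  obtain ⟨D, hD, hDle⟩ := exists_rpow_mul_exp_le (c := k + α) (by linarith)
  set Φ : ℝ → Rn n → ℂ := fun σ ξ => ((τ * radTerm α (k + α) 0 (σ * τ) (1 * ‖ξ‖ ^ 2) : ℝ) : ℂ)
    with hΦ
  have hm : Measurable (Function.uncurry Φ) := by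
    simp only [hΦ, radTerm, Function.uncurry_def]
    fun_prop
  have hi : Integrable (Function.uncurry Φ) ((volume.restrict (Ioc (0 : ℝ) 1)).prod volume) := by
    have h1 : Integrable (fun _ : ℝ => τ) (volume.restrict (Ioc (0 : ℝ) 1)) := integrable_const τ
    refine (h1.mul_prod (integrable_const_mul_exp_neg_half_norm_sq (n := n) (C := D))).mono'
      hm.aestronglyMeasurable ?_
    have h2 : ∀ᵐ z ∂((volume.restrict (Ioc (0 : ℝ) 1)).prod (volume : Measure (Rn n))),
        z.1 ∈ Ioc (0 : ℝ) 1 :=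
      Measure.quasiMeasurePreserving_fst.ae (ae_restrict_mem measurableSet_Ioc)
    filter_upwards [h2] with z hz
    have hs : 0 ≤ z.1 * τ := mul_nonneg hz.1.le hτ
    have hr : 0 ≤ ‖z.2‖ ^ 2 := by positivity
    simp only [hΦ, Function.uncurry_def, Complex.norm_real, one_mul]
    rw [Real.norm_of_nonneg (mul_nonneg hτ (radTerm_nonneg _ _ _ hs hr))]
    refine mul_le_mul_of_nonneg_left ?_ hτ
    refine (radTerm_le _ _ _ hs hr).trans ?_
    simpa using hDle _ hr
  have h := lintegral_fourier_integral_le hm hi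
  have he : (fun ξ : Rn n => ∫ σ in Ioc (0 : ℝ) 1, Φ σ ξ) =
      fun ξ : Rn n => (radDiff α k τ (‖ξ‖ ^ 2) : ℂ) := by
    funext ξ
    rw [hΦ, integral_complex_ofReal, one_mul, integral_mul_radTerm hα hk0 (by positivity)]
  rw [he] at h
  refine h.trans ?_
  calc ∫⁻ σ in Ioc (0 : ℝ) 1, (∫⁻ x, ‖𝓕 (Φ σ) x‖ₑ)
      ≤ ∫⁻ σ in Ioc (0 : ℝ) 1, ‖τ‖ₑ * C := by
        refine setLIntegral_mono measurable_const fun σ hσ => ?_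
        rw [hΦ]
        simp only
        rw [lintegral_fourier_radial_scale (radTerm α (k + α) 0 (σ * τ)) τ one_pos]
        gcongr
        exact hle _ (mul_nonneg hσ.1.le hτ)
    _ = ‖τ‖ₑ * C := by simp

/-- The (unnormalised) Gamma kernel `s^(k-1) r^k exp (-s r)`. -/
def gammaKer (k s r : ℝ) : ℝ := s ^ (k - 1) * r ^ k * Real.exp (-(s * r))

theorem gammaKer_nonneg (k : ℝ) {s r : ℝ} (hs : 0 ≤ s) (hr : 0 ≤ r) : 0 ≤ gammaKer k s r := by
  unfold gammaKer; positivity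

theorem gammaKer_mul_exp_eq {α k s r : ℝ} (hα : 0 < α) (hk : α ≤ k) (hs : 0 < s) (hr : 0 ≤ r) :
    gammaKer k s r * Real.exp (-(r ^ α)) =
      s ^ (α - 1) * radTerm α (k - α) 1 (s ^ (-α)) (s * r) := by
  have h1 : s ^ (-α) * (s * r) ^ α = r ^ α := by
    rw [Real.mul_rpow hs.le hr, ← mul_assoc, ← Real.rpow_add hs]
    simp
  have h2 : s ^ (α - 1) * s ^ (k - α) = s ^ (k - 1) := by
    rw [← Real.rpow_add hs]; congr 1; ring
  have h3 : r ^ k = r ^ (k - α) * r ^ α := by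
    rw [← Real.rpow_add_of_nonneg hr (by linarith) hα.le]; congr 1; ring
  rw [radTerm, h1, gammaKer, ← h2, h3, Real.mul_rpow hs.le hr]
  ring

theorem gammaKer_mul_one_sub_exp_eq {α k s r : ℝ} (hs : 0 < s) (hr : 0 ≤ r) :
    gammaKer k s r * (1 - Real.exp (-(r ^ α))) =
      s⁻¹ * radDiff α k (s ^ (-α)) (s * r) := by
  have h1 : s ^ (-α) * (s * r) ^ α = r ^ α := by
    rw [Real.mul_rpow hs.le hr, ← mul_assoc, ← Real.rpow_add hs]
    simp
  rw [radDiff, h1, gammaKer, Real.mul_rpow hs.le hr, Real.rpow_sub_one hs.ne']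
  ring

theorem hasIntegrableFourier_low {n : ℕ} (hn : 1 ≤ n) {α k : ℝ} (hα : 0 < α)
    (hk : (n : ℝ) + 1 + α ≤ k) :
    HasIntegrableFourier fun ξ : Rn n => ∫ s in Ioc (0 : ℝ) 1,
      ((gammaKer k s (‖ξ‖ ^ 2) * Real.exp (-((‖ξ‖ ^ 2) ^ α)) : ℝ) : ℂ) := by
  have hn0 : (0 : ℝ) ≤ n := Nat.cast_nonneg n
  obtain ⟨C, hC, hle⟩ := exists_lintegral_fourier_radTerm_le hn α (a := k - α) 1 (by linarith)
  have hint : ∀ {c : ℝ}, -1 < c → IntegrableOn (fun s : ℝ => s ^ c) (Ioc 0 1) := fun hc => by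
    rw [← intervalIntegrable_iff_integrableOn_Ioc_of_le zero_le_one]
    exact intervalIntegral.intervalIntegrable_rpow' hc
  have hm : Measurable (Function.uncurry fun (s : ℝ) (ξ : Rn n) =>
      ((gammaKer k s (‖ξ‖ ^ 2) * Real.exp (-((‖ξ‖ ^ 2) ^ α)) : ℝ) : ℂ)) := by
    simp only [gammaKer, Function.uncurry_def]
    fun_prop
  refine HasIntegrableFourier.integral hm ?_ ?_
  · refine ((hint (c := k - 1) (by linarith)).mul_prod
      (integrable_rpow_mul_exp_neg_rpow (n := n) hα (k := k) (by linarith))).mono'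
      hm.aestronglyMeasurable ?_
    have h2 : ∀ᵐ z ∂((volume.restrict (Ioc (0 : ℝ) 1)).prod (volume : Measure (Rn n))),
        z.1 ∈ Ioc (0 : ℝ) 1 :=
      Measure.quasiMeasurePreserving_fst.ae (ae_restrict_mem measurableSet_Ioc)
    filter_upwards [h2] with z hz
    have hs := hz.1.le
    have hr : 0 ≤ ‖z.2‖ ^ 2 := by positivity
    simp only [Function.uncurry_def, Complex.norm_real]
    rw [Real.norm_of_nonneg (mul_nonneg (gammaKer_nonneg k hs hr) (Real.exp_pos _).le),
      ← mul_assoc]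
    refine mul_le_mul_of_nonneg_right ?_ (Real.exp_pos _).le
    unfold gammaKer
    refine mul_le_of_le_one_right (by positivity) (Real.exp_le_one_iff.2 ?_)
    linarith [mul_nonneg hs hr]
  · calc ∫⁻ s in Ioc (0 : ℝ) 1, (∫⁻ x, ‖𝓕 (fun ξ : Rn n =>
            ((gammaKer k s (‖ξ‖ ^ 2) * Real.exp (-((‖ξ‖ ^ 2) ^ α)) : ℝ) : ℂ)) x‖ₑ)
        ≤ ∫⁻ s in Ioc (0 : ℝ) 1, ‖s ^ (α - 1)‖ₑ * C := by
          refine setLIntegral_mono (by fun_prop) fun s hs => ?_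
          simp only [gammaKer_mul_exp_eq hα (by linarith : α ≤ k) hs.1 (sq_nonneg _)]
          rw [lintegral_fourier_radial_scale _ _ hs.1]
          gcongr
          exact hle _ (Real.rpow_nonneg hs.1.le _)
      _ < ⊤ := by
          rw [lintegral_mul_const' _ _ hC]
          exact ENNReal.mul_lt_top (hint (by linarith)).2 hC.lt_top

theorem hasIntegrableFourier_high {n : ℕ} (hn : 1 ≤ n) {α k : ℝ} (hα : 0 < α)
    (hk : (n : ℝ) + 1 ≤ k) :
    HasIntegrableFourier fun ξ : Rn n => ∫ s in Ioi (1 : ℝ),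
      ((gammaKer k s (‖ξ‖ ^ 2) * (1 - Real.exp (-((‖ξ‖ ^ 2) ^ α))) : ℝ) : ℂ) := by
  have hn0 : (0 : ℝ) ≤ n := Nat.cast_nonneg n
  obtain ⟨C, hC, hle⟩ := exists_lintegral_fourier_radDiff_le hn hα hk
  obtain ⟨D, hD, hDle⟩ := exists_rpow_mul_exp_le (c := k + α) (by linarith)
  have hint : IntegrableOn (fun s : ℝ => s ^ (-1 - α)) (Ioi 1) :=
    integrableOn_Ioi_rpow_of_lt (by linarith) one_pos
  have hm : Measurable (Function.uncurry fun (s : ℝ) (ξ : Rn n) =>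
      ((gammaKer k s (‖ξ‖ ^ 2) * (1 - Real.exp (-((‖ξ‖ ^ 2) ^ α))) : ℝ) : ℂ)) := by
    simp only [gammaKer, Function.uncurry_def]
    fun_prop
  refine HasIntegrableFourier.integral hm ?_ ?_
  · refine (hint.mul_prod (integrable_const_mul_exp_neg_half_norm_sq (n := n) (C := D))).mono'
      hm.aestronglyMeasurable ?_
    have h2 : ∀ᵐ z ∂((volume.restrict (Ioi (1 : ℝ))).prod (volume : Measure (Rn n))),
        z.1 ∈ Ioi (1 : ℝ) :=
      Measure.quasiMeasurePreserving_fst.ae (ae_restrict_mem measurableSet_Ioi)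
    filter_upwards [h2] with z hz
    obtain ⟨s, ξ⟩ := z
    have hs1 : (1 : ℝ) < s := hz
    have hs : 0 < s := by linarith
    simp only [Function.uncurry_def, Complex.norm_real]
    set r := ‖ξ‖ ^ 2
    have hr : 0 ≤ r := by positivity
    have he : 0 ≤ 1 - Real.exp (-(r ^ α)) :=
      sub_nonneg.2 (Real.exp_le_one_iff.2 (by simp; positivity))
    have he' : 1 - Real.exp (-(r ^ α)) ≤ r ^ α := by
      linarith [Real.add_one_le_exp (-(r ^ α))]
    rw [Real.norm_of_nonneg (mul_nonneg (gammaKer_nonneg k hs.le hr) he)]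
    calc gammaKer k s r * (1 - Real.exp (-(r ^ α)))
        ≤ gammaKer k s r * r ^ α :=
          mul_le_mul_of_nonneg_left he' (gammaKer_nonneg k hs.le hr)
      _ = s ^ (-1 - α) * ((s * r) ^ (k + α) * Real.exp (-(s * r))) := by
          have h3 : s ^ (-1 - α) * s ^ (k + α) = s ^ (k - 1) := by
            rw [← Real.rpow_add hs]; congr 1; ring
          rw [gammaKer, Real.mul_rpow hs.le hr,
            Real.rpow_add_of_nonneg hr (by linarith) hα.le, ← h3]
          ring
      _ ≤ s ^ (-1 - α) * (D * Real.exp (-(s * r / 2))) :=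
          mul_le_mul_of_nonneg_left (hDle _ (by positivity)) (by positivity)
      _ ≤ s ^ (-1 - α) * (D * Real.exp (-(r / 2))) := by
          gcongr
          exact le_mul_of_one_le_left hr hs1.le
  · calc ∫⁻ s in Ioi (1 : ℝ), (∫⁻ x, ‖𝓕 (fun ξ : Rn n =>
            ((gammaKer k s (‖ξ‖ ^ 2) * (1 - Real.exp (-((‖ξ‖ ^ 2) ^ α))) : ℝ) : ℂ)) x‖ₑ)
        ≤ ∫⁻ s in Ioi (1 : ℝ), ‖s ^ (-1 - α)‖ₑ * C := by
          refine setLIntegral_mono (by fun_prop) fun s hs => ?_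
          have hs0 : 0 < s := one_pos.trans hs
          simp only [gammaKer_mul_one_sub_exp_eq hs0 (sq_nonneg _)]
          rw [lintegral_fourier_radial_scale _ _ hs0]
          have h3 : s ^ (-1 - α) = s⁻¹ * s ^ (-α) := by
            rw [← Real.rpow_neg_one s, ← Real.rpow_add hs0]; congr 1
          rw [h3, enorm_mul, mul_assoc]
          gcongr
          exact hle _ (Real.rpow_nonneg hs0.le _)
      _ < ⊤ := by
          rw [lintegral_mul_const' _ _ hC]
          exact ENNReal.mul_lt_top hint.2 hC.lt_top

theorem hasIntegrableFourier_gaussian (n : ℕ) :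
    HasIntegrableFourier fun ξ : Rn n => ((Real.exp (-((‖ξ‖ ^ 2) ^ (1 : ℝ))) : ℝ) : ℂ) := by
  have hI : ∀ {b : ℂ}, 0 < b.re → Integrable fun ξ : Rn n => Complex.exp (-b * ‖ξ‖ ^ 2) :=
    fun hb => by simpa using GaussianFourier.integrable_cexp_neg_mul_sq_norm_add hb 0 0
  have he : (fun ξ : Rn n => ((Real.exp (-((‖ξ‖ ^ 2) ^ (1 : ℝ))) : ℝ) : ℂ)) =
      fun ξ : Rn n => Complex.exp (-1 * (‖ξ‖ : ℂ) ^ 2) := by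
    funext ξ
    simp
  rw [he]
  refine ⟨hI (by simp), ?_⟩
  have h1 : 𝓕 (fun ξ : Rn n => Complex.exp (-1 * (‖ξ‖ : ℂ) ^ 2)) = fun x : Rn n =>
      ((Real.pi : ℂ) / 1) ^ ((Module.finrank ℝ (Rn n) : ℂ) / 2) *
        Complex.exp (-((Real.pi ^ 2 : ℝ) : ℂ) * ‖x‖ ^ 2) := by
    funext x
    rw [fourier_gaussian_innerProductSpace (by simp)]
    simp
  rw [h1]
  refine (hI ?_).const_mul _
  rw [Complex.ofReal_re]
  positivity

theorem hasIntegrableFourier_exp_neg_rpow {n : ℕ} (hn : 1 ≤ n) {α : ℝ} (hα : 0 < α) :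
    HasIntegrableFourier fun ξ : Rn n => ((Real.exp (-((‖ξ‖ ^ 2) ^ α)) : ℝ) : ℂ) := by
  have hn0 : (0 : ℝ) ≤ n := Nat.cast_nonneg n
  set k : ℝ := n + 1 + α + 1 with hk
  have hΓ : Real.Gamma k ≠ 0 := (Real.Gamma_pos_of_pos (by positivity)).ne'
  have hα' := (hasIntegrableFourier_low hn hα (k := k) (by linarith)).sub
    (hasIntegrableFourier_high hn hα (k := k) (by linarith))
  have h1 := (hasIntegrableFourier_low hn one_pos (k := k) (by linarith)).sub
    (hasIntegrableFourier_high hn one_pos (k := k) (by linarith))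
  refine (((hα'.sub h1).const_mul ((Real.Gamma k : ℂ)⁻¹)).add
    (hasIntegrableFourier_gaussian n)).congr_ae ?_
  have : Nonempty (Fin n) := ⟨⟨0, hn⟩⟩
  have hne : ∀ᵐ ξ : Rn n, ξ ≠ 0 := by
    have : Nontrivial (Rn n) := inferInstance
    simp [ae_iff]
  filter_upwards [hne] with ξ hξ
  have hr : 0 < ‖ξ‖ ^ 2 := by positivity
  simp only [integral_complex_ofReal, integral_mul_const]
  set r := ‖ξ‖ ^ 2
  have h2 : ∫ s in Ioi (0 : ℝ), gammaKer k s r = Real.Gamma k := by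
    have h3 := Real.integral_rpow_mul_exp_neg_mul_Ioi (a := k) (r := r) (by positivity) hr
    have h4 : ∀ s, gammaKer k s r = r ^ k * (s ^ (k - 1) * Real.exp (-(r * s))) := fun s => by
      rw [gammaKer, mul_comm s r]; ring
    simp only [h4]
    rw [integral_const_mul, h3, one_div, Real.inv_rpow hr.le, mul_inv_cancel_left₀ (by positivity)]
  have hi : IntegrableOn (fun s => gammaKer k s r) (Ioi 0) :=
    Integrable.of_integral_ne_zero (h2 ▸ hΓ)
  have h5 : Real.Gamma k = (∫ s in Ioc (0 : ℝ) 1, gammaKer k s r) +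
      ∫ s in Ioi (1 : ℝ), gammaKer k s r := by
    rw [← h2, ← Ioc_union_Ioi_eq_Ioi (zero_le_one (α := ℝ)),
      setIntegral_union (Ioc_disjoint_Ioi le_rfl) measurableSet_Ioi
        (hi.mono_set Ioc_subset_Ioi_self) (hi.mono_set (Ioi_subset_Ioi zero_le_one))]
  rw [← eq_sub_iff_add_eq, inv_mul_eq_iff_eq_mul₀ (by exact_mod_cast hΓ)]
  rw [h5]
  push_cast
  ring

theorem exists_lintegral_gKer_le {n : ℕ} (hn : 1 ≤ n) {α : ℝ} (hα : 0 < α) :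
    ∃ G : ℝ≥0∞, G ≠ ⊤ ∧ ∀ t > 0, ∫⁻ x, ‖gKer n α t x‖ₑ ≤ G := by
  refine ⟨_, (hasIntegrableFourier_exp_neg_rpow hn hα).2.2.ne, fun t ht => ?_⟩
  have hs : 0 < t ^ (1 / α) := Real.rpow_pos_of_pos ht _
  have h1 : (fun ξ : Rn n => ((1 * Real.exp (-((t ^ (1 / α) * ‖ξ‖ ^ 2) ^ α)) : ℝ) : ℂ)) =
      fun ξ : Rn n => (Real.exp (-t * ‖ξ‖ ^ (2 * α)) : ℂ) := by
    funext ξ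
    rw [one_mul, Real.mul_rpow hs.le (sq_nonneg _), ← Real.rpow_mul ht.le,
      one_div_mul_cancel hα.ne', Real.rpow_one, Real.rpow_mul (norm_nonneg _), Real.rpow_two,
      neg_mul]
  have h2 := lintegral_fourier_radial_scale (n := n) (fun r => Real.exp (-(r ^ α))) 1 hs
  rw [h1, enorm_one, one_mul] at h2
  set φ : Rn n → ℂ := fun ξ => (Real.exp (-t * ‖ξ‖ ^ (2 * α)) : ℂ)
  rw [← h2, ← lintegral_neg_eq_self (fun x => ‖𝓕 φ x‖ₑ)]
  refine lintegral_mono fun x => ?_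
  rw [gKer, Real.fourierInv_eq_fourier_neg, ← ofReal_norm, ← ofReal_norm]
  exact ENNReal.ofReal_le_ofReal (Complex.abs_re_le_norm _)

theorem measurable_gKer (n : ℕ) (α : ℝ) :
    Measurable (Function.uncurry fun t x => gKer n α t x) := by
  have h1 : Measurable (Function.uncurry fun (t : ℝ) (ξ : Rn n) =>
      (Real.exp (-t * ‖ξ‖ ^ (2 * α)) : ℂ)) := by
    simp only [Function.uncurry_def]
    fun_prop
  have h2 := measurable_fourier_uncurry h1
  have h3 : Measurable fun z : ℝ × Rn n => (z.1, -z.2) := by fun_prop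
  have h4 : (Function.uncurry fun t x => gKer n α t x) = fun z : ℝ × Rn n =>
      (Function.uncurry (fun (t : ℝ) x =>
        𝓕 (fun ξ : Rn n => (Real.exp (-t * ‖ξ‖ ^ (2 * α)) : ℂ)) x) (z.1, -z.2)).re := by
    funext z
    simp only [Function.uncurry_def, gKer, Real.fourierInv_eq_fourier_neg]
  rw [h4]
  exact Complex.measurable_re.comp (h2.comp h3)

theorem eLpNorm_ofReal_eq {n : ℕ} {q : ℝ} (hq : 0 < q) (h : Rn n → ℝ) :
    eLpNorm h (ENNReal.ofReal q) volume = (∫⁻ x, ‖h x‖ₑ ^ q) ^ (1 / q) := by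
  rw [eLpNorm_eq_lintegral_rpow_enorm_toReal (by simpa using hq) ENNReal.ofReal_ne_top,
    ENNReal.toReal_ofReal hq.le]

theorem eLpNorm_integral_conv_le {n : ℕ} {S : Type*} [MeasurableSpace S] (ν : Measure S)
    [SFinite ν] {q : ℝ} (hq : 1 < q) {g f : S → Rn n → ℝ}
    (hg : Measurable (Function.uncurry g)) (hf : Measurable (Function.uncurry f)) :
    eLpNorm (fun x => ∫ s, conv n (g s) (f s) x ∂ν) (ENNReal.ofReal q) volume ≤
      ∫⁻ s, (∫⁻ y, ‖g s y‖ₑ) * eLpNorm (f s) (ENNReal.ofReal q) volume ∂ν := by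
  have hq0 : 0 < q := one_pos.trans hq
  set F : S → Rn n → Rn n → ℝ≥0∞ := fun s x y => ‖g s y‖ₑ * ‖f s (x - y)‖ₑ with hF
  have hFm : Measurable fun z : (S × Rn n) × Rn n => F z.1.1 z.1.2 z.2 := by
    have h1 : Measurable fun z : (S × Rn n) × Rn n => g z.1.1 z.2 :=
      hg.comp (by fun_prop : Measurable fun z : (S × Rn n) × Rn n => (z.1.1, z.2))
    have h2 : Measurable fun z : (S × Rn n) × Rn n => f z.1.1 (z.1.2 - z.2) :=
      hf.comp (by fun_prop : Measurable fun z : (S × Rn n) × Rn n => (z.1.1, z.1.2 - z.2))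
    exact h1.enorm.mul h2.enorm
  have hF1 : Measurable (Function.uncurry fun s x => ∫⁻ y, F s x y) := hFm.lintegral_prod_right'
  have hconv : ∀ s x, ‖conv n (g s) (f s) x‖ₑ ≤ ∫⁻ y, F s x y := fun s x => by
    refine (enorm_integral_le_lintegral_enorm _).trans_eq ?_
    rw [← lintegral_sub_left_eq_self (fun y => F s x y) x]
    refine lintegral_congr fun y => ?_
    simp only [hF, enorm_mul, sub_sub_cancel]
  rw [eLpNorm_ofReal_eq hq0]
  calc (∫⁻ x, ‖∫ s, conv n (g s) (f s) x ∂ν‖ₑ ^ q) ^ (1 / q)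
      ≤ (∫⁻ x, (∫⁻ s, (∫⁻ y, F s x y) ∂ν) ^ q) ^ (1 / q) := by
        gcongr with x
        exact (enorm_integral_le_lintegral_enorm _).trans (lintegral_mono fun s => hconv s x)
    _ ≤ ∫⁻ s, (∫⁻ x, (∫⁻ y, F s x y) ^ q) ^ (1 / q) ∂ν :=
        lintegral_rpow_lintegral_le volume ν hq hF1
    _ ≤ ∫⁻ s, (∫⁻ y, (∫⁻ x, F s x y ^ q) ^ (1 / q)) ∂ν := by
        refine lintegral_mono fun s => ?_
        refine lintegral_rpow_lintegral_le (F := fun y x => F s x y) volume volume hq ?_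
        exact hFm.comp (by fun_prop : Measurable fun z : Rn n × Rn n => ((s, z.2), z.1))
    _ = ∫⁻ s, (∫⁻ y, ‖g s y‖ₑ) * eLpNorm (f s) (ENNReal.ofReal q) volume ∂ν := by
        refine lintegral_congr fun s => ?_
        have hgs : Measurable (g s) := hg.comp measurable_prodMk_left
        rw [← lintegral_mul_const _ hgs.enorm]
        refine lintegral_congr fun y => ?_
        simp only [hF, ENNReal.mul_rpow_of_nonneg _ _ hq0.le]
        rw [lintegral_const_mul' _ _ (ENNReal.rpow_ne_top_of_nonneg hq0.le enorm_ne_top),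
          lintegral_sub_right_eq_self (fun x => ‖f s x‖ₑ ^ q),
          ENNReal.mul_rpow_of_nonneg _ _ (by positivity), ← ENNReal.rpow_mul,
          mul_one_div_cancel hq0.ne', ENNReal.rpow_one, eLpNorm_ofReal_eq hq0]

theorem le_max_rpow {T a b r : ℝ} (hT : 0 < T) (ha : 0 < a) (har : a ≤ r) (hrb : r ≤ b) :
    T ≤ max (T ^ (1 / a)) (T ^ (1 / b)) ^ r := by
  have hr : 0 < r := ha.trans_le har
  have hb : 0 < b := hr.trans_le hrb
  rcases le_total 1 T with h | h
  · calc T = T ^ (1 : ℝ) := (Real.rpow_one T).symm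
      _ ≤ T ^ (1 / a * r) := by
        refine Real.rpow_le_rpow_of_exponent_le h ?_
        rw [one_div_mul_eq_div, one_le_div ha]
        exact har
      _ = (T ^ (1 / a)) ^ r := Real.rpow_mul hT.le _ _
      _ ≤ _ := by gcongr; exact le_max_left _ _
  · calc T = T ^ (1 : ℝ) := (Real.rpow_one T).symm
      _ ≤ T ^ (1 / b * r) := by
        refine Real.rpow_le_rpow_of_exponent_ge hT h ?_
        rw [one_div_mul_eq_div, div_le_one hb]
        exact hrb
      _ = (T ^ (1 / b)) ^ r := Real.rpow_mul hT.le _ _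
      _ ≤ _ := by gcongr; exact le_max_right _ _

theorem eNormT_le_of_forall_eLpNorm_le {n : ℕ} {p : ℝ → ℝ} {q T a b : ℝ} {u : ℝ → Rn n → ℝ}
    {B : ℝ≥0∞} (hT : 0 < T) (ha : 0 < a)
    (hp : ∀ᵐ t ∂(volume.restrict (Ioc (0 : ℝ) T)), a ≤ p t ∧ p t ≤ b)
    (hu : ∀ t ∈ Ioc (0 : ℝ) T, eLpNorm (u t) (ENNReal.ofReal q) volume ≤ B) :
    eNormT n p q T u ≤ ENNReal.ofReal (max (T ^ (1 / a)) (T ^ (1 / b))) * B := by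
  set M := max (T ^ (1 / a)) (T ^ (1 / b)) with hM
  have hMpos : 0 < M := lt_max_of_lt_left (Real.rpow_pos_of_pos hT _)
  have hM0 : ENNReal.ofReal M ≠ 0 := by simpa using hMpos
  refine le_of_forall_gt_imp_ge_of_dense fun lam hlam => sInf_le ⟨pos_of_gt hlam, ?_⟩
  calc ∫⁻ t in Ioc (0 : ℝ) T, (eLpNorm (u t) (ENNReal.ofReal q) volume / lam) ^ p t
      ≤ ∫⁻ t in Ioc (0 : ℝ) T, (ENNReal.ofReal T)⁻¹ := by
        refine lintegral_mono_ae ?_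
        filter_upwards [hp, ae_restrict_mem measurableSet_Ioc] with t ht htT
        have hpt : 0 < p t := ha.trans_le ht.1
        have h1 : eLpNorm (u t) (ENNReal.ofReal q) volume / lam ≤ (ENNReal.ofReal M)⁻¹ := by
          refine ENNReal.div_le_of_le_mul ?_
          calc eLpNorm (u t) (ENNReal.ofReal q) volume ≤ B := hu t htT
            _ = (ENNReal.ofReal M)⁻¹ * (ENNReal.ofReal M * B) := by
              rw [← mul_assoc, ENNReal.inv_mul_cancel hM0 ENNReal.ofReal_ne_top, one_mul]
            _ ≤ (ENNReal.ofReal M)⁻¹ * lam := by gcongr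
        calc _ ≤ (ENNReal.ofReal M)⁻¹ ^ p t := by gcongr
          _ = (ENNReal.ofReal (M ^ p t))⁻¹ := by
            rw [ENNReal.inv_rpow, ENNReal.ofReal_rpow_of_pos hMpos]
          _ ≤ (ENNReal.ofReal T)⁻¹ := by
            gcongr
            exact le_max_rpow hT ha ht.1 ht.2
    _ = 1 := by
        rw [setLIntegral_const, Real.volume_Ioc, sub_zero,
          ENNReal.inv_mul_cancel (by simpa using hT) ENNReal.ofReal_ne_top]

/-- Control of the external force term in `E_T`:
`‖∫_0^t 𝔤_{t−s}^α ∗ f(s,·) ds‖_{E_T} ≤ C max{T^{1/p⁻}, T^{1/p⁺}} ‖f‖_{L^1_t L^{q̄(·)}_x}`. -/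
theorem stmt11 (n : ℕ) (hn : 1 ≤ n) (α : ℝ) (hα : 0 < α)
    (q : ℝ) (hq : 1 < q) (qb : Rn n → ℝ) (hqb : IsPembq n q qb)
    (p : ℝ → ℝ) (hpm : Measurable p) (hp1 : ∀ t ∈ Ici (0:ℝ), 1 ≤ p t)
    (hpminus : 1 < essInf p (volume.restrict (Ici (0:ℝ))))
    (hpplus : ∃ M : ℝ, ∀ᵐ t ∂(volume.restrict (Ici (0:ℝ))), p t ≤ M) :
    ∃ C > (0:ℝ), ∀ T > (0:ℝ), ∀ f : ℝ → Rn n → ℝ, Measurable (Function.uncurry f) →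
      (∫⁻ s in Ioi (0:ℝ), luxNormR volume qb (f s)) < ⊤ →
      eNormT n p q T (fun t x => ∫ s in Ioc (0:ℝ) t, conv n (gKer n α (t - s)) (f s) x)
        ≤ ENNReal.ofReal (C * max (T ^ (1 / essInf p (volume.restrict (Ici (0:ℝ)))))
            (T ^ (1 / essSup p (volume.restrict (Ici (0:ℝ))))))
          * ∫⁻ s in Ioi (0:ℝ), luxNormR volume qb (f s) := by
  obtain ⟨K, hK, hKle⟩ := hqb.eLpNorm_le_luxNormR hn hq
  obtain ⟨G, hG, hGle⟩ := exists_lintegral_gKer_le hn hα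
  refine ⟨(G * K).toReal + 1, by positivity, fun T hT f hf _ => ?_⟩
  set A := ∫⁻ s in Ioi (0:ℝ), luxNormR volume qb (f s) with hA
  set P := volume.restrict (Ici (0:ℝ)) with hP
  have hlow : ∀ᵐ t ∂P, essInf p P ≤ p t :=
    ae_essInf_le ⟨1, (ae_restrict_mem measurableSet_Ici).mono fun t ht => hp1 t ht⟩
  obtain ⟨M, hM⟩ := hpplus
  have hupp : ∀ᵐ t ∂P, p t ≤ essSup p P := ae_le_essSup ⟨M, hM⟩
  have hp : ∀ᵐ t ∂(volume.restrict (Ioc (0:ℝ) T)), essInf p P ≤ p t ∧ p t ≤ essSup p P :=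
    ae_mono (Measure.restrict_mono (fun t ht => ht.1.le) le_rfl) (hlow.and hupp)
  have hu : ∀ t ∈ Ioc (0:ℝ) T,
      eLpNorm (fun x => ∫ s in Ioc (0:ℝ) t, conv n (gKer n α (t - s)) (f s) x)
        (ENNReal.ofReal q) volume ≤ G * K * A := fun t _ => by
    have hg : Measurable (Function.uncurry fun s x => gKer n α (t - s) x) :=
      (measurable_gKer n α).comp
        (by fun_prop : Measurable fun z : ℝ × Rn n => (t - z.1, z.2))
    refine (eLpNorm_integral_conv_le (volume.restrict (Ioc (0:ℝ) t)) hq hg hf).trans ?_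
    rw [← restrict_Ioo_eq_restrict_Ioc]
    calc ∫⁻ s in Ioo (0:ℝ) t,
          (∫⁻ y, ‖gKer n α (t - s) y‖ₑ) * eLpNorm (f s) (ENNReal.ofReal q) volume
        ≤ ∫⁻ s in Ioo (0:ℝ) t, G * K * luxNormR volume qb (f s) := by
          refine setLIntegral_mono' measurableSet_Ioo fun s hs => ?_
          rw [mul_assoc]
          gcongr
          · exact hGle _ (sub_pos.2 hs.2)
          · exact hKle _
      _ = G * K * ∫⁻ s in Ioo (0:ℝ) t, luxNormR volume qb (f s) :=
          lintegral_const_mul' _ _ (ENNReal.mul_ne_top hG hK)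
      _ ≤ G * K * A := by
          gcongr
          exact lintegral_mono_set Ioo_subset_Ioi_self
  refine (eNormT_le_of_forall_eLpNorm_le hT (one_pos.trans hpminus) hp hu).trans ?_
  rw [← mul_assoc, mul_comm ((G * K).toReal + 1), ENNReal.ofReal_mul (by positivity)]
  gcongr
  rw [← ENNReal.ofReal_toReal (ENNReal.mul_ne_top hG hK)]
  gcongr
  simp
end
end

section
/- Let n ≥ 1, q ∈ (1,∞), let p(·) ∈ P^log(ℝ^n) with 1 < p⁻ ≤ p⁺ < ∞, and let β satisfy 0 < β < min{n/p⁺, n/q}. Define the variable exponent r(·) = n·p(·)/(n − βq). Then there exists a constant C > 0 such that for every f ∈ L^{p(·)}(ℝ^n) ∩ L^q(ℝ^n): ‖I_β(f)‖_{L^{r(·)}(ℝ^n)} ≤ C · max{‖f‖_{L^{p(·)}(ℝ^n)}, ‖f‖_{L^q(ℝ^n)}}. -/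
open MeasureTheory Set
open scoped ENNReal

noncomputable section

/-- The Riesz potential `I_β(f)(x) = ∫ |f(y)| |x−y|^{β−n} dy`, valued in `[0,∞]`. -/
def rieszPot (n : ℕ) (β : ℝ) (f : Rn n → ℝ) (x : Rn n) : ℝ≥0∞ :=
  ∫⁻ y, ENNReal.ofReal |f y| * ENNReal.ofReal (‖x - y‖ ^ (β - (n:ℝ)))

open Metric ENNReal

section MaximalFunction

variable {n : ℕ}

/-- The closed ball of radius `2 ^ k`. -/
abbrev dyadicBall (x : Rn n) (k : ℤ) : Set (Rn n) := closedBall x ((2 : ℝ) ^ k)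

/-- The centred Hardy–Littlewood maximal function over balls of dyadic radius. -/
def maximalFn (g : Rn n → ℝ≥0∞) (x : Rn n) : ℝ≥0∞ :=
  ⨆ k : ℤ, (∫⁻ y in dyadicBall x k, g y) / volume (dyadicBall x k)

lemma dyadicBall_volume_ne_zero (x : Rn n) (k : ℤ) : volume (dyadicBall x k) ≠ 0 :=
  (measure_closedBall_pos volume x (by positivity)).ne'

lemma dyadicBall_volume_ne_top (x : Rn n) (k : ℤ) : volume (dyadicBall x k) ≠ ⊤ :=
  measure_closedBall_lt_top.ne

lemma volume_closedBall_eq (x : Rn n) {r : ℝ} (hr : 0 ≤ r) :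
    volume (closedBall x r) = ENNReal.ofReal (r ^ n) * volume (ball (0 : Rn n) 1) := by
  rw [Measure.addHaar_closedBall _ _ hr, finrank_euclideanSpace_fin]

lemma lintegral_div_dyadicBall_le_maximalFn (g : Rn n → ℝ≥0∞) (x : Rn n) (k : ℤ) :
    (∫⁻ y in dyadicBall x k, g y) / volume (dyadicBall x k) ≤ maximalFn g x :=
  le_iSup (fun k : ℤ => (∫⁻ y in dyadicBall x k, g y) / volume (dyadicBall x k)) k

lemma setLIntegral_dyadicBall_le_mul_maximalFn (g : Rn n → ℝ≥0∞) (x : Rn n) (k : ℤ) :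
    ∫⁻ y in dyadicBall x k, g y ≤ volume (dyadicBall x k) * maximalFn g x := by
  refine le_trans (le_of_eq ?_) (mul_le_mul_right (lintegral_div_dyadicBall_le_maximalFn g x k) _)
  exact (ENNReal.mul_div_cancel (dyadicBall_volume_ne_zero x k) (dyadicBall_volume_ne_top x k)).symm

lemma measurable_maximalFn {g : Rn n → ℝ≥0∞} (hg : Measurable g) : Measurable (maximalFn g) := by
  refine Measurable.iSup fun k => ?_
  have h1 : ∀ x : Rn n, (∫⁻ y in dyadicBall x k, g y) / volume (dyadicBall x k)
      = (∫⁻ y, (closedBall (0 : Rn n) ((2 : ℝ) ^ k)).indicator 1 (y - x) * g y)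
        / volume (dyadicBall (0 : Rn n) k) := by
    intro x
    rw [← lintegral_indicator measurableSet_closedBall]
    congr 1
    · refine lintegral_congr fun y => ?_
      by_cases hy : y ∈ dyadicBall x k
      · have : y - x ∈ closedBall (0 : Rn n) ((2 : ℝ) ^ k) := by
          simpa [dist_eq_norm] using hy
        simp [hy, this]
      · have : y - x ∉ closedBall (0 : Rn n) ((2 : ℝ) ^ k) := by
          simpa [dist_eq_norm] using hy
        simp only [indicator_of_notMem hy, indicator_of_notMem this, zero_mul]
    · rw [volume_closedBall_eq _ (by positivity), volume_closedBall_eq _ (by positivity)]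
  simp_rw [h1]
  refine Measurable.div_const (Measurable.lintegral_prod_right ?_) _
  refine Measurable.mul ?_ (hg.comp measurable_snd)
  exact (measurable_one.indicator measurableSet_closedBall).comp
    (measurable_snd.sub measurable_fst)

lemma maximalFn_add_le (g h : Rn n → ℝ≥0∞) (hg : Measurable g) (x : Rn n) :
    maximalFn (fun y => g y + h y) x ≤ maximalFn g x + maximalFn h x := by
  refine iSup_le fun k => ?_
  rw [lintegral_add_left hg, ENNReal.add_div]
  exact add_le_add (lintegral_div_dyadicBall_le_maximalFn g x k)
    (lintegral_div_dyadicBall_le_maximalFn h x k)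

lemma maximalFn_le_of_le {g : Rn n → ℝ≥0∞} {c : ℝ≥0∞} (h : ∀ y, g y ≤ c) (x : Rn n) :
    maximalFn g x ≤ c := by
  refine iSup_le fun k => ?_
  refine ENNReal.div_le_of_le_mul ?_
  calc ∫⁻ y in dyadicBall x k, g y ≤ ∫⁻ _ in dyadicBall x k, c := lintegral_mono h
    _ = c * volume (dyadicBall x k) := by simp

/-- The weak type `(1,1)` inequality. -/
lemma mul_volume_lt_maximalFn_le (hn : 1 ≤ n) (g : Rn n → ℝ≥0∞) {l : ℝ≥0∞} (hl : l ≠ 0)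
    (hl' : l ≠ ⊤) :
    l * volume {x | l < maximalFn g x} ≤ 5 ^ n * ∫⁻ y, g y := by
  by_cases hI : ∫⁻ y, g y = ⊤
  · simp [hI]
  set v := volume (ball (0 : Rn n) 1)
  have hv : v ≠ 0 := (measure_ball_pos volume _ one_pos).ne'
  have hv' : v ≠ ⊤ := measure_ball_lt_top.ne
  let t : Set (Rn n × ℤ) := {a | l * volume (dyadicBall a.1 a.2) < ∫⁻ y in dyadicBall a.1 a.2, g y}
  let R : ℝ := max 1 ((∫⁻ y, g y) / (l * v)).toReal
  have hR : ∀ a ∈ t, (2 : ℝ) ^ a.2 ≤ R := by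
    intro a ha
    by_cases h1 : (2 : ℝ) ^ a.2 ≤ 1
    · exact h1.trans (le_max_left _ _)
    refine le_trans ?_ (le_max_right _ _)
    have h2 : l * volume (dyadicBall a.1 a.2) ≤ ∫⁻ y, g y :=
      (le_of_lt ha).trans (setLIntegral_le_lintegral _ _)
    rw [volume_closedBall_eq _ (by positivity)] at h2
    have h3 : ENNReal.ofReal (((2 : ℝ) ^ a.2) ^ n) ≤ (∫⁻ y, g y) / (l * v) := by
      rw [ENNReal.le_div_iff_mul_le (Or.inl (mul_ne_zero hl hv))
        (Or.inl (ENNReal.mul_ne_top hl' hv'))]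
      calc _ = l * (ENNReal.ofReal (((2 : ℝ) ^ a.2) ^ n) * v) := by ring
        _ ≤ _ := h2
    have h4 := (ENNReal.ofReal_le_iff_le_toReal
      (ENNReal.div_ne_top hI (mul_ne_zero hl hv))).1 h3
    refine le_trans ?_ h4
    exact le_self_pow₀ (not_le.1 h1).le (by omega)
  obtain ⟨u, hut, hud, hcov⟩ := Vitali.exists_disjoint_subfamily_covering_enlargement_closedBall
    t (fun a => a.1) (fun a => (2 : ℝ) ^ a.2) R hR 5 (by norm_num)
  have hu : u.Countable := hud.countable_of_nonempty_interior fun a _ => by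
    refine ⟨a.1, ball_subset_interior_closedBall (mem_ball_self (by positivity))⟩
  have hsub : {x | l < maximalFn g x} ⊆ ⋃ a ∈ u, closedBall a.1 (5 * (2 : ℝ) ^ a.2) := by
    intro x hx
    obtain ⟨k, hk⟩ := lt_iSup_iff.1 (show l < ⨆ k : ℤ,
      (∫⁻ y in dyadicBall x k, g y) / volume (dyadicBall x k) from hx)
    have hxt : (x, k) ∈ t := by
      rw [ENNReal.lt_div_iff_mul_lt (Or.inl (dyadicBall_volume_ne_zero x k))
        (Or.inl (dyadicBall_volume_ne_top x k))] at hk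
      exact hk
    obtain ⟨b, hb, hxb⟩ := hcov _ hxt
    exact mem_biUnion hb (hxb (mem_closedBall_self (by positivity)))
  calc l * volume {x | l < maximalFn g x}
      ≤ l * ∑' a : u, volume (closedBall a.1.1 (5 * (2 : ℝ) ^ a.1.2)) := by
        gcongr
        exact (measure_mono hsub).trans (measure_biUnion_le _ hu _)
    _ = 5 ^ n * ∑' a : u, l * volume (dyadicBall a.1.1 a.1.2) := by
        rw [ENNReal.tsum_mul_left, mul_left_comm, ← ENNReal.tsum_mul_left (a := (5 : ℝ≥0∞) ^ n)]
        congr 2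
        ext a
        rw [volume_closedBall_eq _ (by positivity), volume_closedBall_eq _ (by positivity), mul_pow,
          ENNReal.ofReal_mul (by positivity), ENNReal.ofReal_pow (by norm_num), mul_assoc]
        simp
    _ ≤ 5 ^ n * ∑' a : u, ∫⁻ y in dyadicBall a.1.1 a.1.2, g y := by
        gcongr with a
        exact le_of_lt (hut a.2)
    _ = 5 ^ n * ∫⁻ y in ⋃ a ∈ u, dyadicBall a.1 a.2, g y := by
        rw [lintegral_biUnion hu (fun _ _ => measurableSet_closedBall) hud]
    _ ≤ 5 ^ n * ∫⁻ y, g y := by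
        gcongr
        exact Measure.restrict_le_self

lemma mul_volume_two_mul_lt_maximalFn_le (hn : 1 ≤ n) {g : Rn n → ℝ≥0∞} (hg : Measurable g)
    {l : ℝ≥0∞} (hl : l ≠ 0) (hl' : l ≠ ⊤) :
    l * volume {x | l < maximalFn g x / 2} ≤ 5 ^ n * ∫⁻ y, {y | l < g y}.indicator g y := by
  have hm : MeasurableSet {y | l < g y} := measurableSet_lt measurable_const hg
  refine le_trans ?_ (mul_volume_lt_maximalFn_le hn _ hl hl')
  refine mul_le_mul_right (measure_mono fun x hx => ?_) _
  by_contra hcon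
  have hcon' : maximalFn ({y | l < g y}.indicator g) x ≤ l := not_lt.1 hcon
  have h1 : maximalFn g x ≤ l + l := by
    calc maximalFn g x = maximalFn
          (fun y => {y | l < g y}.indicator g y + {y | l < g y}ᶜ.indicator g y) x := by
          congr 1
          ext y
          exact (congrFun (indicator_self_add_compl {y | l < g y} g) y).symm
      _ ≤ _ := maximalFn_add_le _ _ (hg.indicator hm) x
      _ ≤ l + l := by
          refine add_le_add hcon' (maximalFn_le_of_le (fun y => ?_) x)
          by_cases hy : l < g y
          · simp [hy]
          · simpa [hy] using not_lt.1 hy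
  have h2 : maximalFn g x / 2 ≤ l := by
    refine ENNReal.div_le_of_le_mul ?_
    rwa [mul_two]
  exact absurd hx (not_lt.2 h2)

lemma lintegral_Ioi_indicator_lt (b : ℝ≥0∞) {a : ℝ} (ha : 0 < a) :
    ∫⁻ t in Ioi (0 : ℝ), {t : ℝ | ENNReal.ofReal t < b}.indicator
      (fun t => ENNReal.ofReal (a * t ^ (a - 1))) t = b ^ a := by
  have hfin : ∀ c : ℝ, 0 ≤ c → ∫⁻ t in Ioc (0 : ℝ) c, ENNReal.ofReal (a * t ^ (a - 1))
      = ENNReal.ofReal c ^ a := by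
    intro c hc
    rw [← ofReal_integral_eq_lintegral_ofReal]
    · rw [← intervalIntegral.integral_of_le hc, intervalIntegral.integral_const_mul,
        integral_rpow (Or.inl (by linarith)), ENNReal.ofReal_rpow_of_nonneg hc ha.le]
      congr 1
      rw [sub_add_cancel, Real.zero_rpow ha.ne']
      field_simp
      simp
    · have := (intervalIntegral.intervalIntegrable_rpow' (a := 0) (b := c)
        (show -1 < a - 1 by linarith)).const_mul a
      rwa [intervalIntegrable_iff_integrableOn_Ioc_of_le hc] at this
    · filter_upwards [ae_restrict_mem measurableSet_Ioc] with t ht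
      have := ht.1
      positivity
  by_cases hb : b = ⊤
  · subst hb
    rw [ENNReal.top_rpow_of_pos ha]
    refine ENNReal.eq_top_of_forall_nnreal_le fun r => ?_
    have hr : (r : ℝ≥0∞) = ENNReal.ofReal ((r : ℝ) ^ a⁻¹) ^ a := by
      rw [ENNReal.ofReal_rpow_of_nonneg (by positivity) ha.le, ← Real.rpow_mul r.coe_nonneg,
        inv_mul_cancel₀ ha.ne', Real.rpow_one, ENNReal.ofReal_coe_nnreal]
    rw [hr, ← hfin _ (by positivity)]
    refine (lintegral_mono_set (fun t ht => ht.1)).trans (lintegral_mono fun t => ?_)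
    simp
  · obtain ⟨c, hc, rfl⟩ : ∃ c : ℝ, 0 ≤ c ∧ b = ENNReal.ofReal c :=
      ⟨b.toReal, ENNReal.toReal_nonneg, (ENNReal.ofReal_toReal hb).symm⟩
    rw [← hfin c hc, ← lintegral_indicator measurableSet_Ioi,
      ← lintegral_indicator measurableSet_Ioc]
    refine lintegral_congr_ae ?_
    filter_upwards [Measure.ae_ne volume c] with t ht
    by_cases h0 : 0 < t
    · by_cases h1 : t < c
      · have : ENNReal.ofReal t < ENNReal.ofReal c :=
          (ENNReal.ofReal_lt_ofReal_iff (h0.trans h1)).2 h1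
        simp [h0, h1.le, this]
      · have h2 : ¬ t ≤ c := fun h => h1 (lt_of_le_of_ne h ht)
        have : ¬ ENNReal.ofReal t < ENNReal.ofReal c :=
          not_lt.2 (ENNReal.ofReal_le_ofReal (not_lt.1 h1))
        simp [h2, this]
    · simp [h0]

/-- The strong type `(a,a)` inequality for the maximal function, `a > 1`. -/
lemma lintegral_maximalFn_rpow_le (hn : 1 ≤ n) {a : ℝ} (ha : 1 < a) {g : Rn n → ℝ≥0∞}
    (hg : Measurable g) :
    ∫⁻ x, maximalFn g x ^ a
      ≤ ENNReal.ofReal (2 ^ a * (5 ^ n * (a / (a - 1)))) * ∫⁻ x, g x ^ a := by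
  have ha0 : 0 < a := by linarith
  have hM := measurable_maximalFn hg
  have hmeas : Measurable (Function.uncurry fun (x : Rn n) (t : ℝ) =>
      {t : ℝ | ENNReal.ofReal t < maximalFn g x / 2}.indicator
        (fun t => ENNReal.ofReal (a * t ^ (a - 1))) t) := by
    have hs : MeasurableSet {z : Rn n × ℝ | ENNReal.ofReal z.2 < maximalFn g z.1 / 2} :=
      measurableSet_lt (ENNReal.measurable_ofReal.comp measurable_snd)
        ((hM.comp measurable_fst).div_const 2)
    have hf : Measurable fun z : Rn n × ℝ => ENNReal.ofReal (a * z.2 ^ (a - 1)) := by fun_prop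
    exact hf.indicator hs
  have hmeas' : Measurable (Function.uncurry fun (t : ℝ) (y : Rn n) =>
      g y * {t : ℝ | ENNReal.ofReal t < g y}.indicator
        (fun t => ENNReal.ofReal ((a - 1) * t ^ (a - 1 - 1))) t) := by
    have hs : MeasurableSet {z : ℝ × Rn n | ENNReal.ofReal z.1 < g z.2} :=
      measurableSet_lt (ENNReal.measurable_ofReal.comp measurable_fst) (hg.comp measurable_snd)
    have hf : Measurable fun z : ℝ × Rn n =>
      ENNReal.ofReal ((a - 1) * z.1 ^ (a - 1 - 1)) := by fun_prop
    exact (hg.comp measurable_snd).mul (hf.indicator hs)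
  have key : ∫⁻ x, (maximalFn g x / 2) ^ a
      ≤ ENNReal.ofReal (5 ^ n * (a / (a - 1))) * ∫⁻ x, g x ^ a := by
    calc ∫⁻ x, (maximalFn g x / 2) ^ a
        = ∫⁻ x, ∫⁻ t in Ioi (0 : ℝ), {t : ℝ | ENNReal.ofReal t < maximalFn g x / 2}.indicator
            (fun t => ENNReal.ofReal (a * t ^ (a - 1))) t := by
          simp_rw [lintegral_Ioi_indicator_lt _ ha0]
      _ = ∫⁻ t in Ioi (0 : ℝ), ∫⁻ x, {t : ℝ | ENNReal.ofReal t < maximalFn g x / 2}.indicator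
            (fun t => ENNReal.ofReal (a * t ^ (a - 1))) t :=
          lintegral_lintegral_swap hmeas.aemeasurable
      _ ≤ ∫⁻ t in Ioi (0 : ℝ), ENNReal.ofReal (5 ^ n * (a / (a - 1))) * ∫⁻ y,
            g y * {t : ℝ | ENNReal.ofReal t < g y}.indicator
              (fun t => ENNReal.ofReal ((a - 1) * t ^ (a - 1 - 1))) t := by
          refine setLIntegral_mono' measurableSet_Ioi fun t (ht : 0 < t) => ?_
          have hw := mul_volume_two_mul_lt_maximalFn_le hn hg
            (ENNReal.ofReal_pos.2 ht).ne' ENNReal.ofReal_ne_top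
          have hs : MeasurableSet {x | ENNReal.ofReal t < maximalFn g x / 2} :=
            measurableSet_lt measurable_const (hM.div_const 2)
          have hs' : MeasurableSet {x | ENNReal.ofReal t < g x} :=
            measurableSet_lt measurable_const hg
          set W := ENNReal.ofReal ((a - 1) * t ^ (a - 1 - 1)) with hW
          have hsplit : ENNReal.ofReal (a * t ^ (a - 1))
              = ENNReal.ofReal (a / (a - 1)) * W * ENNReal.ofReal t := by
            have h1 : 0 < a - 1 := by linarith
            rw [hW, ← ENNReal.ofReal_mul (by positivity), ← ENNReal.ofReal_mul (by positivity)]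
            congr 1
            rw [Real.rpow_sub_one ht.ne' (a - 1)]
            field_simp
          calc ∫⁻ x, {t : ℝ | ENNReal.ofReal t < maximalFn g x / 2}.indicator
                (fun t => ENNReal.ofReal (a * t ^ (a - 1))) t
              = ∫⁻ x, {x | ENNReal.ofReal t < maximalFn g x / 2}.indicator
                (fun _ => ENNReal.ofReal (a * t ^ (a - 1))) x := rfl
            _ = ENNReal.ofReal (a / (a - 1)) * W * (ENNReal.ofReal t *
                  volume {x | ENNReal.ofReal t < maximalFn g x / 2}) := by
                rw [lintegral_indicator_const hs, hsplit, mul_assoc]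
            _ ≤ ENNReal.ofReal (a / (a - 1)) * W *
                  (5 ^ n * ∫⁻ y, {y | ENNReal.ofReal t < g y}.indicator g y) := by gcongr
            _ = ENNReal.ofReal (5 ^ n * (a / (a - 1))) *
                  (W * ∫⁻ y, {y | ENNReal.ofReal t < g y}.indicator g y) := by
                rw [ENNReal.ofReal_mul (by positivity), ENNReal.ofReal_pow (by norm_num),
                  ENNReal.ofReal_ofNat]
                ring
            _ = _ := by
                rw [← lintegral_const_mul _ (hg.indicator hs')]
                congr 1
                refine lintegral_congr fun y => ?_
                by_cases hy : ENNReal.ofReal t < g y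
                · simp [hy, hW, mul_comm]
                · simp [hy]
      _ = ENNReal.ofReal (5 ^ n * (a / (a - 1))) * ∫⁻ y, ∫⁻ t in Ioi (0 : ℝ),
            g y * {t : ℝ | ENNReal.ofReal t < g y}.indicator
              (fun t => ENNReal.ofReal ((a - 1) * t ^ (a - 1 - 1))) t := by
          rw [lintegral_const_mul _ (Measurable.lintegral_prod_right hmeas'),
            lintegral_lintegral_swap hmeas'.aemeasurable]
      _ = _ := by
          congr 1
          refine lintegral_congr fun y => ?_
          rw [lintegral_const_mul, lintegral_Ioi_indicator_lt _ (by linarith)]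
          · conv_rhs => rw [← add_sub_cancel 1 a, ENNReal.rpow_add_of_nonneg _ _ zero_le_one
              (by linarith), ENNReal.rpow_one]
          · have hf : Measurable fun t : ℝ => ENNReal.ofReal ((a - 1) * t ^ (a - 1 - 1)) := by
              fun_prop
            exact hf.indicator (measurableSet_lt ENNReal.measurable_ofReal measurable_const)
  calc ∫⁻ x, maximalFn g x ^ a = ∫⁻ x, ENNReal.ofReal (2 ^ a) * (maximalFn g x / 2) ^ a := by
        refine lintegral_congr fun x => ?_
        rw [← ENNReal.ofReal_rpow_of_nonneg (by norm_num) ha0.le, ENNReal.ofReal_ofNat,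
          ← ENNReal.mul_rpow_of_nonneg _ _ ha0.le, ENNReal.mul_div_cancel (by norm_num) (by norm_num)]
    _ = ENNReal.ofReal (2 ^ a) * ∫⁻ x, (maximalFn g x / 2) ^ a :=
        lintegral_const_mul _ ((hM.div_const 2).pow_const a)
    _ ≤ _ := by
        rw [ENNReal.ofReal_mul (by positivity), mul_assoc]
        gcongr

end MaximalFunction

section Hedberg

lemma ofReal_two_zpow_rpow (k : ℤ) (s : ℝ) :
    ENNReal.ofReal (((2 : ℝ) ^ k) ^ s) = (2 : ℝ≥0∞) ^ ((k : ℝ) * s) := by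
  rw [← Real.rpow_intCast, ← Real.rpow_mul (by norm_num),
    ← ENNReal.ofReal_rpow_of_pos (by norm_num), ENNReal.ofReal_ofNat]

lemma two_rpow_add (s t : ℝ) : (2 : ℝ≥0∞) ^ (s + t) = 2 ^ s * 2 ^ t :=
  ENNReal.rpow_add _ _ (by norm_num) (by norm_num)

lemma volume_dyadicBall_eq {n : ℕ} (x : Rn n) (k : ℤ) :
    volume (dyadicBall x k) = 2 ^ ((k : ℝ) * n) * volume (ball (0 : Rn n) 1) := by
  rw [volume_closedBall_eq _ (by positivity), ← ofReal_two_zpow_rpow, Real.rpow_natCast]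

lemma lintegral_le_rpow_mul_measure_univ {α : Type*} [MeasurableSpace α] (μ : Measure α) {a : ℝ}
    (ha : 1 ≤ a) {f : α → ℝ≥0∞} (hf : Measurable f) :
    ∫⁻ x, f x ∂μ ≤ (∫⁻ x, f x ^ a ∂μ) ^ (1 / a) * μ univ ^ (1 - 1 / a) := by
  have h := eLpNorm'_le_eLpNorm'_mul_rpow_measure_univ (μ := μ) (f := f) zero_lt_one ha
    hf.aestronglyMeasurable
  simpa [eLpNorm'] using h

lemma lintegral_div_rpow_le {α : Type*} [MeasurableSpace α] (μ : Measure α) {a : ℝ}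
    (ha : 1 ≤ a) {f : α → ℝ≥0∞} (hf : Measurable f) (h0 : μ univ ≠ 0) (htop : μ univ ≠ ⊤) :
    ((∫⁻ x, f x ∂μ) / μ univ) ^ a ≤ (∫⁻ x, f x ^ a ∂μ) / μ univ := by
  have ha0 : 0 < a := by linarith
  have h := lintegral_le_rpow_mul_measure_univ μ ha hf
  calc ((∫⁻ x, f x ∂μ) / μ univ) ^ a
      ≤ (((∫⁻ x, f x ^ a ∂μ) ^ (1 / a) * μ univ ^ (1 - 1 / a)) / μ univ) ^ a := by gcongr
    _ = (((∫⁻ x, f x ^ a ∂μ) ^ (1 / a) * μ univ ^ (- (1 / a)))) ^ a := by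
        congr 1
        rw [div_eq_mul_inv, mul_assoc, ← ENNReal.rpow_neg_one, ← ENNReal.rpow_add _ _ h0 htop]
        congr 2
        ring
    _ = (∫⁻ x, f x ^ a ∂μ) / μ univ := by
        rw [ENNReal.mul_rpow_of_nonneg _ _ ha0.le, ← ENNReal.rpow_mul, ← ENNReal.rpow_mul,
          one_div_mul_cancel ha0.ne', ENNReal.rpow_one, neg_mul, one_div_mul_cancel ha0.ne',
          ENNReal.rpow_neg_one, div_eq_mul_inv]

lemma tsum_two_rpow_neg_abs_ne_top {d : ℝ} (hd : 0 < d) :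
    ∑' k : ℤ, (2 : ℝ≥0∞) ^ (-(|(k : ℝ)| * d)) ≠ ⊤ := by
  have hr : Summable fun k : ℤ => ((2 : ℝ) ^ (-d)) ^ k.natAbs := by
    have hlt : (2 : ℝ) ^ (-d) < 1 := Real.rpow_lt_one_of_one_lt_of_neg (by norm_num) (by linarith)
    have hg := summable_geometric_of_lt_one (by positivity) hlt
    refine Summable.of_nat_of_neg ?_ ?_ <;> simpa using hg
  have heq : ∀ k : ℤ, (2 : ℝ≥0∞) ^ (-(|(k : ℝ)| * d))
      = ENNReal.ofReal (((2 : ℝ) ^ (-d)) ^ k.natAbs) := by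
    intro k
    rw [← Real.rpow_natCast, ← Real.rpow_mul (by norm_num),
      ← ENNReal.ofReal_rpow_of_pos (by norm_num), ENNReal.ofReal_ofNat, Nat.cast_natAbs,
      Int.cast_abs]
    congr 1
    ring
  simp_rw [heq]
  rw [← ENNReal.ofReal_tsum_of_nonneg (fun _ => by positivity) hr]
  exact ENNReal.ofReal_ne_top

lemma exists_tsum_min_le {β γ : ℝ} (hβ : 0 < β) (hγ : 0 < γ) :
    ∃ K : ℝ≥0∞, K ≠ ⊤ ∧ ∀ m : ℝ≥0∞,
      ∑' k : ℤ, min ((2 : ℝ≥0∞) ^ ((k : ℝ) * β) * m) ((2 : ℝ≥0∞) ^ ((k : ℝ) * -γ))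
        ≤ K * m ^ (γ / (β + γ)) := by
  have hs : 0 < β + γ := by linarith
  set d := min β γ with hd
  have hd0 : 0 < d := lt_min hβ hγ
  set S := ∑' k : ℤ, (2 : ℝ≥0∞) ^ (-(|(k : ℝ)| * d)) with hS
  have hStop : S ≠ ⊤ := tsum_two_rpow_neg_abs_ne_top hd0
  have hS0 : S ≠ 0 := by
    intro h
    have := ENNReal.tsum_eq_zero.1 h 0
    simp at this
  refine ⟨2 ^ γ * S, ENNReal.mul_ne_top (by simp [ENNReal.rpow_eq_top_iff]) hStop,
    fun m => ?_⟩
  rcases eq_or_ne m 0 with rfl | hm0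
  · simp
  rcases eq_or_ne m ⊤ with rfl | hmt
  · rw [ENNReal.top_rpow_of_pos (by positivity), ENNReal.mul_top]
    · exact le_top
    · exact mul_ne_zero (by simp [ENNReal.rpow_eq_zero_iff]) hS0
  obtain ⟨j, hj1, hj2⟩ := ENNReal.exists_mem_Ioc_zpow (y := (2 : ℝ≥0∞) ^ (β + γ)) hm0 hmt
    (ENNReal.one_lt_rpow (by norm_num) hs) (by simp [ENNReal.rpow_eq_top_iff])
  rw [← ENNReal.rpow_intCast, ← ENNReal.rpow_mul] at hj1 hj2
  have hmain : (2 : ℝ≥0∞) ^ ((j + 1 : ℝ) * γ) ≤ 2 ^ γ * m ^ (γ / (β + γ)) := by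
    rw [add_mul, one_mul, add_comm, two_rpow_add]
    gcongr
    calc (2 : ℝ≥0∞) ^ ((j : ℝ) * γ) = ((2 : ℝ≥0∞) ^ ((β + γ) * j)) ^ (γ / (β + γ)) := by
          rw [← ENNReal.rpow_mul]
          congr 1
          field_simp
      _ ≤ _ := by gcongr
  calc ∑' k : ℤ, min ((2 : ℝ≥0∞) ^ ((k : ℝ) * β) * m) ((2 : ℝ≥0∞) ^ ((k : ℝ) * -γ))
      = ∑' k : ℤ, min ((2 : ℝ≥0∞) ^ (((k - (j + 1) : ℤ) : ℝ) * β) * m)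
          ((2 : ℝ≥0∞) ^ (((k - (j + 1) : ℤ) : ℝ) * -γ)) :=
        ((Equiv.subRight (j + 1 : ℤ)).tsum_eq fun k : ℤ => min ((2 : ℝ≥0∞) ^ ((k : ℝ) * β) * m)
          ((2 : ℝ≥0∞) ^ ((k : ℝ) * -γ))).symm
    _ ≤ ∑' k : ℤ, (2 : ℝ≥0∞) ^ ((j + 1 : ℝ) * γ) * (2 : ℝ≥0∞) ^ (-(|(k : ℝ)| * d)) := by
        gcongr with k
        rw [← two_rpow_add]
        rcases le_total 0 (k : ℝ) with hk | hk
        · refine (min_le_right _ _).trans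
            (ENNReal.rpow_le_rpow_of_exponent_le (by norm_num) ?_)
          rw [abs_of_nonneg hk]
          push_cast
          nlinarith [min_le_right β γ]
        · refine (min_le_left _ _).trans ?_
          refine (mul_le_mul_right hj2 _).trans ?_
          rw [← two_rpow_add]
          refine ENNReal.rpow_le_rpow_of_exponent_le (by norm_num) ?_
          rw [abs_of_nonpos hk]
          push_cast
          nlinarith [min_le_left β γ]
    _ = (2 : ℝ≥0∞) ^ ((j + 1 : ℝ) * γ) * S := ENNReal.tsum_mul_left
    _ ≤ 2 ^ γ * m ^ (γ / (β + γ)) * S := by gcongr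
    _ = _ := by ring

variable {n : ℕ}

lemma lintegral_mul_rpow_norm_sub_le_tsum {β : ℝ} (hβ : β < n) {g : Rn n → ℝ≥0∞}
    (hg : Measurable g) (x : Rn n) :
    ∫⁻ y, g y * ENNReal.ofReal (‖x - y‖ ^ (β - n))
      ≤ ∑' k : ℤ, (2 : ℝ≥0∞) ^ ((k : ℝ) * (β - n)) * ∫⁻ y in dyadicBall x (k + 1), g y := by
  have h1 : ∀ y, g y * ENNReal.ofReal (‖x - y‖ ^ (β - n))
      ≤ ∑' k : ℤ, (dyadicBall x (k + 1)).indicator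
          (fun y => (2 : ℝ≥0∞) ^ ((k : ℝ) * (β - n)) * g y) y := by
    intro y
    rcases eq_or_ne y x with rfl | hy
    · simp [Real.zero_rpow (by linarith : β - n ≠ 0)]
    have hpos : 0 < ‖x - y‖ := norm_pos_iff.2 (sub_ne_zero.2 hy.symm)
    obtain ⟨k, hk1, hk2⟩ := exists_mem_Ioc_zpow hpos (one_lt_two (α := ℝ))
    refine le_trans ?_ (ENNReal.le_tsum k)
    have hmem : y ∈ dyadicBall x (k + 1) := by
      rw [mem_closedBall, dist_comm, dist_eq_norm]
      exact hk2
    rw [indicator_of_mem hmem, mul_comm, ← ofReal_two_zpow_rpow]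
    gcongr 1
    exact ENNReal.ofReal_le_ofReal
      (Real.rpow_le_rpow_of_nonpos (by positivity) hk1.le (by linarith))
  refine (lintegral_mono h1).trans (le_of_eq ?_)
  rw [lintegral_tsum fun k => ((hg.const_mul _).indicator measurableSet_closedBall).aemeasurable]
  refine tsum_congr fun k => ?_
  rw [lintegral_indicator measurableSet_closedBall, lintegral_const_mul _ hg]

/-- Hedberg's pointwise inequality. -/
lemma exists_lintegral_mul_rpow_norm_sub_le_maximalFn {q β : ℝ} (hq : 1 < q) (hβ : 0 < β)
    (hβq : β < n / q) :
    ∃ K : ℝ≥0∞, K ≠ ⊤ ∧ ∀ g : Rn n → ℝ≥0∞, Measurable g → ∫⁻ y, g y ^ q ≤ 1 → ∀ x,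
      ∫⁻ y, g y * ENNReal.ofReal (‖x - y‖ ^ (β - n)) ≤ K * maximalFn g x ^ (1 - β * q / n) := by
  have hq0 : 0 < q := by linarith
  have hβn : β * q < n := (lt_div_iff₀ hq0).1 hβq
  have hn : (0 : ℝ) < n := by nlinarith
  obtain ⟨K, hK, hKm⟩ := exists_tsum_min_le hβ (sub_pos.2 hβq)
  set v := volume (ball (0 : Rn n) 1)
  have hv' : v ≠ ⊤ := measure_ball_lt_top.ne
  have h1q : 0 ≤ 1 - 1 / q := by
    rw [sub_nonneg, div_le_one hq0]
    exact hq.le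
  set c1 : ℝ≥0∞ := 2 ^ (n : ℝ) * v
  set c2 : ℝ≥0∞ := 2 ^ (n * (1 - 1 / q) : ℝ) * v ^ (1 - 1 / q)
  have hc1 : c1 ≠ ⊤ := ENNReal.mul_ne_top (by simp) hv'
  have hc2 : c2 ≠ ⊤ := ENNReal.mul_ne_top (by simp [ENNReal.rpow_eq_top_iff])
    (ENNReal.rpow_ne_top_of_nonneg h1q hv')
  refine ⟨(c1 + c2) * K, ENNReal.mul_ne_top (by simp [hc1, hc2]) hK, fun g hg hgq x => ?_⟩
  have hexp : (n / q - β) / (β + (n / q - β)) = 1 - β * q / n := by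
    have hn' := hn.ne'
    rw [add_sub_cancel]
    field_simp
  rw [← hexp, mul_assoc]
  refine le_trans ?_ (mul_le_mul_right (hKm (maximalFn g x)) _)
  refine (lintegral_mul_rpow_norm_sub_le_tsum (by nlinarith) hg x).trans ?_
  rw [← ENNReal.tsum_mul_left]
  refine ENNReal.tsum_le_tsum fun k => ?_
  rcases min_choice ((2 : ℝ≥0∞) ^ ((k : ℝ) * β) * maximalFn g x)
    ((2 : ℝ≥0∞) ^ ((k : ℝ) * -(n / q - β))) with h | h
  · rw [h]
    calc (2 : ℝ≥0∞) ^ ((k : ℝ) * (β - n)) * ∫⁻ y in dyadicBall x (k + 1), g y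
        ≤ (2 : ℝ≥0∞) ^ ((k : ℝ) * (β - n)) *
          (2 ^ (((k + 1 : ℤ) : ℝ) * n) * v * maximalFn g x) := by
          rw [← volume_dyadicBall_eq x]
          gcongr
          exact setLIntegral_dyadicBall_le_mul_maximalFn g x (k + 1)
      _ = ((2 : ℝ≥0∞) ^ ((k : ℝ) * (β - n)) * 2 ^ (((k + 1 : ℤ) : ℝ) * n)) *
          v * maximalFn g x := by ring
      _ = c1 * (2 ^ ((k : ℝ) * β) * maximalFn g x) := by
          rw [← two_rpow_add, show (k : ℝ) * (β - n) + ((k + 1 : ℤ) : ℝ) * n = n + k * β by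
            push_cast
            ring, two_rpow_add]
          ring
      _ ≤ _ := by gcongr; exact le_self_add
  · rw [h]
    calc (2 : ℝ≥0∞) ^ ((k : ℝ) * (β - n)) * ∫⁻ y in dyadicBall x (k + 1), g y
        ≤ (2 : ℝ≥0∞) ^ ((k : ℝ) * (β - n)) *
          (1 * (2 ^ (((k + 1 : ℤ) : ℝ) * n) * v) ^ (1 - 1 / q)) := by
          rw [← volume_dyadicBall_eq x]
          gcongr
          have := lintegral_le_rpow_mul_measure_univ
            (volume.restrict (dyadicBall x (k + 1))) hq.le hg
          rw [Measure.restrict_apply_univ] at this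
          refine this.trans ?_
          gcongr
          exact ENNReal.rpow_le_one ((setLIntegral_le_lintegral _ _).trans hgq) (by positivity)
      _ = ((2 : ℝ≥0∞) ^ ((k : ℝ) * (β - n)) * 2 ^ (((k + 1 : ℤ) : ℝ) * n * (1 - 1 / q))) *
          v ^ (1 - 1 / q) := by
          rw [one_mul, ENNReal.mul_rpow_of_nonneg _ _ h1q, ← ENNReal.rpow_mul]
          ring
      _ = c2 * 2 ^ ((k : ℝ) * -(n / q - β)) := by
          rw [← two_rpow_add, show (k : ℝ) * (β - n) + ((k + 1 : ℤ) : ℝ) * n * (1 - 1 / q)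
              = n * (1 - 1 / q) + k * -(n / q - β) by
            push_cast
            ring, two_rpow_add]
          ring
      _ ≤ _ := by gcongr; exact le_add_self

end Hedberg

section VariableExponent

variable {n : ℕ}

lemma one_le_log_exp_one_add {t : ℝ} (ht : 0 ≤ t) : 1 ≤ Real.log (Real.exp 1 + t) := by
  rw [Real.le_log_iff_exp_le (by positivity)]
  linarith

lemma abs_sub_le_sq_mul_abs_one_div_sub {a b P : ℝ} (ha : 0 < a) (hb : 0 < b) (haP : a ≤ P)
    (hbP : b ≤ P) : |a - b| ≤ P ^ 2 * |1 / a - 1 / b| := by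
  have h : a - b = -(a * b * (1 / a - 1 / b)) := by
    field_simp
    ring
  rw [h, abs_neg, abs_mul, abs_of_pos (mul_pos ha hb)]
  have hab : a * b ≤ P ^ 2 := by nlinarith
  gcongr

/-- A log-Hölder exponent with essential bounds `1 ≤ pm ≤ p ≤ P` satisfies additive log-Hölder
estimates almost everywhere, with a limit at infinity that is at least `pm`. -/
lemma IsPLog.exists_logHolder (hn : 1 ≤ n) {p : Rn n → ℝ} (hp : IsPLog univ p) {pm P : ℝ}
    (hpm : 1 ≤ pm) (hb : ∀ᵐ x ∂(volume : Measure (Rn n)), pm ≤ p x ∧ p x ≤ P) :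
    ∃ c > (0 : ℝ), ∃ pinf ≥ pm,
      (∀ᵐ x ∂(volume : Measure (Rn n)), ∀ᵐ y ∂(volume : Measure (Rn n)), x ≠ y →
        |p x - p y| ≤ c / Real.log (Real.exp 1 + 1 / ‖x - y‖)) ∧
      (∀ᵐ x ∂(volume : Measure (Rn n)), |p x - pinf| ≤ c / Real.log (Real.exp 1 + ‖x‖)) := by
  obtain ⟨-, hp1, C₁, hC₁, C₂, hC₂, pinf, hloc, hinf⟩ := hp
  have : Nonempty (Fin n) := ⟨⟨0, hn⟩⟩
  have hdense := Measure.dense_of_ae hb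
  have hex : ∀ ε > (0 : ℝ), ∃ x, (pm ≤ p x ∧ p x ≤ P) ∧ |1 / p x - 1 / pinf| ≤ ε := by
    intro ε hε
    obtain ⟨x, hx, hxr⟩ := hdense.exists_mem_open
      (isOpen_lt continuous_const continuous_norm : IsOpen {x : Rn n | Real.exp (C₂ / ε) < ‖x‖})
      (NormedSpace.exists_lt_norm ℝ (Rn n) _)
    refine ⟨x, hx, (hinf x (mem_univ x)).trans ?_⟩
    have hL := one_le_log_exp_one_add (norm_nonneg x)
    rw [div_le_iff₀ (by linarith), ← div_le_iff₀' hε, Real.le_log_iff_exp_le (by positivity)]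
    have := Real.exp_pos 1
    have h2 : Real.exp (C₂ / ε) < ‖x‖ := hxr
    linarith
  have hP : 0 < P := by
    obtain ⟨x, hx, -⟩ := hex 1 one_pos
    linarith
  have hlow : 1 / P ≤ 1 / pinf := by
    refine le_of_forall_pos_le_add fun ε hε => ?_
    obtain ⟨x, hx, hxε⟩ := hex ε hε
    have h1 : 1 / P ≤ 1 / p x := one_div_le_one_div_of_le (by linarith) hx.2
    linarith [(abs_le.1 hxε).2]
  have hup : 1 / pinf ≤ 1 / pm := by
    refine le_of_forall_pos_le_add fun ε hε => ?_
    obtain ⟨x, hx, hxε⟩ := hex ε hε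
    have h1 : 1 / p x ≤ 1 / pm := one_div_le_one_div_of_le (by linarith) hx.1
    linarith [(abs_le.1 hxε).1]
  have hpinf : 0 < pinf := one_div_pos.1 ((one_div_pos.2 hP).trans_le hlow)
  have hpinfP : pinf ≤ P := (one_div_le_one_div hP hpinf).1 hlow
  have hpinfm : pm ≤ pinf := (one_div_le_one_div hpinf (by linarith)).1 hup
  refine ⟨P ^ 2 * max C₁ C₂, by positivity, pinf, hpinfm, ?_, ?_⟩
  · filter_upwards [hb] with x hx
    filter_upwards [hb] with y hy hxy
    have hL := one_le_log_exp_one_add (show 0 ≤ 1 / ‖x - y‖ by positivity)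
    calc |p x - p y| ≤ P ^ 2 * |1 / p x - 1 / p y| :=
          abs_sub_le_sq_mul_abs_one_div_sub (by linarith) (by linarith) hx.2 hy.2
      _ ≤ P ^ 2 * (max C₁ C₂ / Real.log (Real.exp 1 + 1 / ‖x - y‖)) := by
          gcongr
          refine (hloc x (mem_univ x) y (mem_univ y) hxy).trans ?_
          gcongr
          exact le_max_left _ _
      _ = _ := by rw [mul_div_assoc]
  · filter_upwards [hb] with x hx
    have hL := one_le_log_exp_one_add (norm_nonneg x)
    calc |p x - pinf| ≤ P ^ 2 * |1 / p x - 1 / pinf| :=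
          abs_sub_le_sq_mul_abs_one_div_sub (by linarith) (by linarith) hx.2 hpinfP
      _ ≤ P ^ 2 * (max C₁ C₂ / Real.log (Real.exp 1 + ‖x‖)) := by
          gcongr
          refine (hinf x (mem_univ x)).trans ?_
          gcongr
          exact le_max_right _ _
      _ = _ := by rw [mul_div_assoc]

/-- The pointwise estimate for the part of the function that is at least one. -/
lemma exists_maximalFn_rpow_le {c : ℝ} (hc : 0 < c) :
    ∃ K : ℝ≥0∞, K ≠ ⊤ ∧ ∀ (s : Rn n → ℝ) (x : Rn n), Measurable s → 1 ≤ s x →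
      (∀ᵐ y, 1 ≤ s y) →
      (∀ᵐ y, x ≠ y → |s x - s y| ≤ c / Real.log (Real.exp 1 + 1 / ‖x - y‖)) →
      ∀ g : Rn n → ℝ≥0∞, Measurable g → (∀ y, g y = 0 ∨ 1 ≤ g y) → ∫⁻ y, g y ^ s y ≤ 1 →
      maximalFn g x ^ s x ≤ K * maximalFn (fun y => g y ^ s y) x := by
  set v := volume (ball (0 : Rn n) 1)
  have hv : v ≠ 0 := (measure_ball_pos volume _ one_pos).ne'
  have hv' : v ≠ ⊤ := measure_ball_lt_top.ne
  set w : ℝ := max 1 (v⁻¹).toReal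
  have hw : 1 ≤ w := le_max_left _ _
  have hvw : v⁻¹ ≤ ENNReal.ofReal w := by
    rw [ENNReal.le_ofReal_iff_toReal_le (ENNReal.inv_ne_top.2 hv) (by positivity)]
    exact le_max_right _ _
  refine ⟨ENNReal.ofReal (w ^ c * Real.exp (n * c)), ENNReal.ofReal_ne_top, ?_⟩
  intro s x hs hsx hs1 hsc g hg hg01 hgs
  have hsx0 : 0 < s x := by linarith
  rw [← ENNReal.le_rpow_inv_iff hsx0]
  refine iSup_le fun k => ?_
  rw [ENNReal.le_rpow_inv_iff hsx0]
  have h2k : (0 : ℝ) < 2 ^ k := by positivity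
  set E := Real.exp 1 + 1 / (2 : ℝ) ^ k with hE
  have hE1 : 1 ≤ E := by
    have := Real.add_one_le_exp (1 : ℝ)
    have : 0 ≤ 1 / (2 : ℝ) ^ k := by positivity
    linarith
  set L := Real.log E with hL
  have hL1 : 1 ≤ L := one_le_log_exp_one_add (by positivity)
  set a := max 1 (s x - c / L) with ha
  have ha1 : 1 ≤ a := le_max_left _ _
  have hasx : a ≤ s x := max_le hsx (by
    have : 0 ≤ c / L := by positivity
    linarith)
  set V := volume (dyadicBall x k) with hV
  have hV0 : V ≠ 0 := dyadicBall_volume_ne_zero x k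
  have hVt : V ≠ ⊤ := dyadicBall_volume_ne_top x k
  set D := (∫⁻ y in dyadicBall x k, g y ^ s y) / V with hD
  have hAD : ((∫⁻ y in dyadicBall x k, g y) / V) ^ a ≤ D := by
    have h := lintegral_div_rpow_le (volume.restrict (dyadicBall x k)) ha1 hg
      (by rwa [Measure.restrict_apply_univ]) (by rwa [Measure.restrict_apply_univ])
    rw [Measure.restrict_apply_univ] at h
    refine h.trans (ENNReal.div_le_div_right (lintegral_mono_ae ?_) _)
    filter_upwards [ae_restrict_of_ae hs1, ae_restrict_of_ae hsc,
      ae_restrict_mem measurableSet_closedBall] with y hy1 hyc hyB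
    have hay : a ≤ s y := by
      refine max_le hy1 ?_
      rcases eq_or_ne x y with rfl | hxy
      · have : 0 ≤ c / L := by positivity
        linarith
      · have hpos : 0 < ‖x - y‖ := norm_pos_iff.2 (sub_ne_zero.2 hxy)
        have hle : ‖x - y‖ ≤ 2 ^ k := by
          rwa [← dist_eq_norm, dist_comm]
        have h3 : c / Real.log (Real.exp 1 + 1 / ‖x - y‖) ≤ c / L := by
          refine div_le_div_of_nonneg_left hc.le (by linarith)
            (Real.log_le_log (by positivity) ?_)
          rw [hE]
          gcongr
        linarith [(abs_le.1 (hyc hxy)).2]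
    rcases hg01 y with h0 | h1
    · rw [h0, ENNReal.zero_rpow_of_pos (by linarith), ENNReal.zero_rpow_of_pos (by linarith)]
    · exact ENNReal.rpow_le_rpow_of_exponent_le h1 hay
  set θ := s x / a - 1 with hθ
  have hθ0 : 0 ≤ θ := by
    rw [hθ, sub_nonneg, one_le_div (by linarith)]
    exact hasx
  have hθL : θ ≤ c / L := by
    have h1 : s x - a ≤ c / L := by linarith [le_max_right 1 (s x - c / L)]
    rw [hθ, div_sub_one (by linarith)]
    exact (div_le_self (by linarith) ha1).trans h1
  have hDV : D ≤ ENNReal.ofReal (w * E ^ n) := by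
    calc D ≤ 1 / V := ENNReal.div_le_div_right ((setLIntegral_le_lintegral _ _).trans hgs) _
      _ = v⁻¹ * ENNReal.ofReal ((1 / 2 ^ k) ^ n) := by
          rw [one_div, hV, volume_closedBall_eq _ h2k.le, ENNReal.mul_inv (Or.inr hv') (Or.inr hv),
            ← ENNReal.ofReal_inv_of_pos (by positivity), mul_comm, one_div, inv_pow]
      _ ≤ ENNReal.ofReal w * ENNReal.ofReal (E ^ n) := by
          gcongr
          rw [hE]
          linarith [Real.exp_pos 1]
      _ = _ := (ENNReal.ofReal_mul (by positivity)).symm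
  have hDθ : D ^ θ ≤ ENNReal.ofReal (w ^ c * Real.exp (n * c)) := by
    calc D ^ θ ≤ ENNReal.ofReal (w * E ^ n) ^ θ := by gcongr
      _ = ENNReal.ofReal ((w * E ^ n) ^ θ) := ENNReal.ofReal_rpow_of_nonneg (by positivity) hθ0
      _ ≤ _ := by
          apply ENNReal.ofReal_le_ofReal
          have h1 : 1 ≤ w * E ^ n := one_le_mul_of_one_le_of_one_le hw (one_le_pow₀ hE1)
          calc (w * E ^ n) ^ θ ≤ (w * E ^ n) ^ (c / L) := Real.rpow_le_rpow_of_exponent_le h1 hθL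
            _ = w ^ (c / L) * (E ^ n) ^ (c / L) := Real.mul_rpow (by positivity) (by positivity)
            _ ≤ w ^ c * Real.exp (n * c) := by
                gcongr
                · exact div_le_self hc.le hL1
                · rw [← Real.rpow_natCast, ← Real.rpow_mul (by positivity),
                    Real.rpow_def_of_pos (by positivity)]
                  apply Real.exp_le_exp.2
                  rw [← hL]
                  field_simp
                  exact le_refl _
  calc ((∫⁻ y in dyadicBall x k, g y) / V) ^ s x
      = (((∫⁻ y in dyadicBall x k, g y) / V) ^ a) ^ (1 + θ) := by
        rw [← ENNReal.rpow_mul]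
        congr 1
        rw [hθ]
        have : a ≠ 0 := by linarith
        field_simp
        ring
    _ ≤ D ^ (1 + θ) := by gcongr
    _ = D * D ^ θ := by
        rw [ENNReal.rpow_add_of_nonneg _ _ zero_le_one hθ0, ENNReal.rpow_one]
    _ ≤ maximalFn (fun y => g y ^ s y) x * ENNReal.ofReal (w ^ c * Real.exp (n * c)) := by
        gcongr
        exact lintegral_div_dyadicBall_le_maximalFn (fun y => g y ^ s y) x k
    _ = _ := mul_comm _ _

lemma rpow_le_mul_rpow_add {a u w c m r : ℝ} (ha0 : 0 ≤ a) (ha1 : a ≤ 1) (hu : 1 ≤ u)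
    (hm : 0 ≤ m) (hr : 0 ≤ r) (h : |u - w| ≤ c / Real.log (Real.exp 1 + r)) :
    a ^ u ≤ Real.exp (m * c) * a ^ w + (1 + r) ^ (-m) := by
  set E := Real.exp 1 + r with hE
  have hL : 1 ≤ Real.log E := one_le_log_exp_one_add hr
  have hE0 : 0 < E := by positivity
  rcases le_or_gt (E ^ (-m)) a with h1 | h1
  · have ha : 0 < a := (Real.rpow_pos_of_pos hE0 _).trans_le h1
    refine le_add_of_le_of_nonneg ?_ (by positivity)
    have h2 : -(m * Real.log E) ≤ Real.log a := by
      have := Real.log_le_log (by positivity) h1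
      rw [Real.log_rpow hE0] at this
      linarith
    have h3 : Real.log a ≤ 0 := Real.log_nonpos ha0 ha1
    rw [Real.rpow_def_of_pos ha, Real.rpow_def_of_pos ha, ← Real.exp_add, Real.exp_le_exp]
    have h4 : -Real.log a * |u - w| ≤ m * c := by
      calc -Real.log a * |u - w| ≤ (m * Real.log E) * (c / Real.log E) := by
            gcongr
            linarith
        _ = m * c := by
            have : Real.log E ≠ 0 := by linarith
            field_simp
    have h5 : -Real.log a * -(u - w) ≤ -Real.log a * |u - w| :=
      mul_le_mul_of_nonneg_left (neg_le_abs _) (by linarith)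
    linarith
  · refine le_add_of_nonneg_of_le (by positivity) ?_
    calc a ^ u ≤ a ^ (1 : ℝ) := Real.rpow_le_rpow_of_exponent_ge_of_imp ha0 ha1 hu (by
            intro _ h
            linarith)
      _ = a := Real.rpow_one a
      _ ≤ E ^ (-m) := h1.le
      _ ≤ (1 + r) ^ (-m) := by
          refine Real.rpow_le_rpow_of_nonpos (by positivity) ?_ (by linarith)
          have := Real.add_one_le_exp (1 : ℝ)
          linarith

lemma ennreal_rpow_le_mul_rpow_add {a : ℝ≥0∞} {u w c m r : ℝ} (ha1 : a ≤ 1) (hu : 1 ≤ u)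
    (hw : 0 ≤ w) (hm : 0 ≤ m) (hr : 0 ≤ r) (h : |u - w| ≤ c / Real.log (Real.exp 1 + r)) :
    a ^ u ≤ ENNReal.ofReal (Real.exp (m * c)) * a ^ w + ENNReal.ofReal ((1 + r) ^ (-m)) := by
  have hat : a ≠ ⊤ := ne_top_of_le_ne_top one_ne_top ha1
  have h0 : 0 ≤ a.toReal := ENNReal.toReal_nonneg
  have h1 : a.toReal ≤ 1 := by
    simpa using ENNReal.toReal_mono one_ne_top ha1
  rw [← ENNReal.ofReal_toReal hat, ENNReal.ofReal_rpow_of_nonneg h0 (by linarith),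
    ENNReal.ofReal_rpow_of_nonneg h0 hw, ← ENNReal.ofReal_mul (by positivity),
    ← ENNReal.ofReal_add (by positivity) (by positivity)]
  exact ENNReal.ofReal_le_ofReal (rpow_le_mul_rpow_add h0 h1 hu hm hr h)

/-- The modular maximal inequality for functions bounded by one. -/
lemma exists_lintegral_maximalFn_rpow_le_of_le_one (hn : 1 ≤ n) {p : Rn n → ℝ}
    (hpm : Measurable p) {c pinf : ℝ} (hpinf : 1 < pinf) (hp1 : ∀ᵐ x, 1 ≤ p x)
    (hinf : ∀ᵐ x, |p x - pinf| ≤ c / Real.log (Real.exp 1 + ‖x‖)) :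
    ∃ A : ℝ≥0∞, A ≠ ⊤ ∧ ∀ g : Rn n → ℝ≥0∞, Measurable g → (∀ y, g y ≤ 1) →
      ∫⁻ y, g y ^ p y ≤ 1 → ∫⁻ x, maximalFn g x ^ p x ≤ A := by
  set H : ℝ≥0∞ := ∫⁻ x : Rn n, ENNReal.ofReal ((1 + ‖x‖) ^ (-(n + 1 : ℝ))) with hH
  have hHt : H ≠ ⊤ := (finite_integral_one_add_norm (by simp)).ne
  set B := ENNReal.ofReal (Real.exp ((n + 1 : ℝ) * c))
  set S := ENNReal.ofReal (2 ^ pinf * (5 ^ n * (pinf / (pinf - 1))))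
  have hmH : Measurable fun x : Rn n => ENNReal.ofReal ((1 + ‖x‖) ^ (-(n + 1 : ℝ))) := by fun_prop
  refine ⟨B * (S * (B * 1 + H)) + H, by finiteness, fun g hg hg1 hgp => ?_⟩
  calc ∫⁻ x, maximalFn g x ^ p x
      ≤ ∫⁻ x, (B * maximalFn g x ^ pinf + ENNReal.ofReal ((1 + ‖x‖) ^ (-(n + 1 : ℝ)))) := by
        refine lintegral_mono_ae ?_
        filter_upwards [hp1, hinf] with x h1 h2
        exact ennreal_rpow_le_mul_rpow_add (maximalFn_le_of_le hg1 x) h1 (by linarith)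
          (by positivity) (norm_nonneg x) h2
    _ = B * (∫⁻ x, maximalFn g x ^ pinf) + H := by
        rw [lintegral_add_right _ hmH, lintegral_const_mul _ ((measurable_maximalFn hg).pow_const _)]
    _ ≤ B * (S * ∫⁻ x, g x ^ pinf) + H := by
        gcongr
        exact lintegral_maximalFn_rpow_le hn hpinf hg
    _ ≤ B * (S * ∫⁻ x, (B * g x ^ p x + ENNReal.ofReal ((1 + ‖x‖) ^ (-(n + 1 : ℝ))))) + H := by
        gcongr 3
        refine lintegral_mono_ae ?_
        filter_upwards [hp1, hinf] with x h1 h2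
        refine ennreal_rpow_le_mul_rpow_add (hg1 x) hpinf.le (by linarith)
          (by positivity) (norm_nonneg x) ?_
        rwa [abs_sub_comm]
    _ = B * (S * (B * (∫⁻ x, g x ^ p x) + H)) + H := by
        rw [lintegral_add_right _ hmH, lintegral_const_mul _ (hg.pow hpm)]
    _ ≤ B * (S * (B * 1 + H)) + H := by gcongr

/-- The modular form of the boundedness of the maximal operator on `L^{p(·)}`. -/
lemma IsPLog.exists_lintegral_maximalFn_rpow_le (hn : 1 ≤ n) {p : Rn n → ℝ}
    (hp : IsPLog univ p) {pm P : ℝ} (hpm : 1 < pm)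
    (hb : ∀ᵐ x ∂(volume : Measure (Rn n)), pm ≤ p x ∧ p x ≤ P) :
    ∃ A : ℝ≥0∞, A ≠ ⊤ ∧ ∀ g : Rn n → ℝ≥0∞, Measurable g →
      ∫⁻ y, g y ^ p y ≤ 1 → ∫⁻ x, maximalFn g x ^ p x ≤ A := by
  have hpmeas : Measurable p := hp.1
  have hpm0 : 0 < pm := by linarith
  obtain ⟨c, hc, pinf, hpinf, hloc, hinf⟩ := hp.exists_logHolder hn hpm.le hb
  have hp1 : ∀ᵐ x ∂(volume : Measure (Rn n)), 1 ≤ p x := by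
    filter_upwards [hb] with x hx
    linarith
  obtain ⟨A₂, hA₂, h₂⟩ := exists_lintegral_maximalFn_rpow_le_of_le_one hn hpmeas
    (hpm.trans_le hpinf) hp1 hinf
  obtain ⟨K, hK, h₁⟩ := exists_maximalFn_rpow_le (n := n) hc
  set S := ENNReal.ofReal (2 ^ pm * (5 ^ n * (pm / (pm - 1))))
  have hP1 : 1 ≤ P := by
    obtain ⟨x, hx⟩ := (Measure.dense_of_ae hb).nonempty
    linarith [hx.1, hx.2]
  refine ⟨2 ^ (P - 1) * (K ^ pm * (S * 1) + A₂), ?_, fun g hg hgp => ?_⟩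
  · refine ENNReal.mul_ne_top (ENNReal.rpow_ne_top_of_nonneg (by linarith) (by norm_num)) ?_
    exact ENNReal.add_ne_top.2 ⟨ENNReal.mul_ne_top (ENNReal.rpow_ne_top_of_nonneg hpm0.le hK)
      (by finiteness), hA₂⟩
  have hs : MeasurableSet {y | 1 ≤ g y} := measurableSet_le measurable_const hg
  set g₁ := {y | 1 ≤ g y}.indicator g with hg₁
  set g₂ := {y | 1 ≤ g y}ᶜ.indicator g with hg₂
  have hg₁m : Measurable g₁ := hg.indicator hs
  have hg₂m : Measurable g₂ := hg.indicator hs.compl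
  have hle₁ : ∫⁻ y, g₁ y ^ p y ≤ 1 := by
    refine le_trans (lintegral_mono_ae ?_) hgp
    filter_upwards [hp1] with y hy
    exact ENNReal.rpow_le_rpow (indicator_le_self _ _ y) (by linarith)
  have hle₂ : ∫⁻ y, g₂ y ^ p y ≤ 1 := by
    refine le_trans (lintegral_mono_ae ?_) hgp
    filter_upwards [hp1] with y hy
    exact ENNReal.rpow_le_rpow (indicator_le_self _ _ y) (by linarith)
  have hg₁01 : ∀ y, g₁ y = 0 ∨ 1 ≤ g₁ y := by
    intro y
    by_cases hy : 1 ≤ g y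
    · right
      simp [hg₁, hy]
    · left
      simp [hg₁, hy]
  have hg₂1 : ∀ y, g₂ y ≤ 1 := by
    intro y
    by_cases hy : 1 ≤ g y
    · simp [hg₂, hy]
    · simpa [hg₂, hy] using (not_le.1 hy).le
  have hsum : ∀ x, maximalFn g x ≤ maximalFn g₁ x + maximalFn g₂ x := by
    intro x
    refine le_trans (le_of_eq ?_) (maximalFn_add_le g₁ g₂ hg₁m x)
    congr 1
    ext y
    exact (congrFun (indicator_self_add_compl {y | 1 ≤ g y} g) y).symm
  have hsmeas : Measurable fun y => p y / pm := hpmeas.div_const pm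
  have hgsm : Measurable fun y => g₁ y ^ (p y / pm) := hg₁m.pow hsmeas
  have hM₁ : ∫⁻ x, maximalFn g₁ x ^ p x ≤ K ^ pm * (S * 1) := by
    calc ∫⁻ x, maximalFn g₁ x ^ p x
        ≤ ∫⁻ x, K ^ pm * maximalFn (fun y => g₁ y ^ (p y / pm)) x ^ pm := by
          refine lintegral_mono_ae ?_
          filter_upwards [hb, hloc] with x hx hxl
          have h := h₁ (fun y => p y / pm) x hsmeas ((one_le_div hpm0).2 hx.1)
            (by filter_upwards [hb] with y hy using (one_le_div hpm0).2 hy.1)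
            (by
              filter_upwards [hxl] with y hy hxy
              rw [← sub_div, abs_div, abs_of_pos hpm0]
              exact (div_le_self (abs_nonneg _) hpm.le).trans (hy hxy))
            g₁ hg₁m hg₁01
            (by
              refine le_trans (lintegral_mono_ae ?_) hle₁
              filter_upwards [hb] with y hy
              rcases hg₁01 y with h0 | h1
              · rw [h0, ENNReal.zero_rpow_of_pos (div_pos (by linarith [hy.1]) hpm0),
                  ENNReal.zero_rpow_of_pos (by linarith [hy.1])]
              · exact ENNReal.rpow_le_rpow_of_exponent_le h1
                  (div_le_self (by linarith [hy.1]) hpm.le))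
          calc maximalFn g₁ x ^ p x = (maximalFn g₁ x ^ (p x / pm)) ^ pm := by
                rw [← ENNReal.rpow_mul, div_mul_cancel₀ _ hpm0.ne']
            _ ≤ (K * maximalFn (fun y => g₁ y ^ (p y / pm)) x) ^ pm := by gcongr
            _ = _ := ENNReal.mul_rpow_of_nonneg _ _ hpm0.le
      _ = K ^ pm * ∫⁻ x, maximalFn (fun y => g₁ y ^ (p y / pm)) x ^ pm :=
          lintegral_const_mul _ ((measurable_maximalFn hgsm).pow_const _)
      _ ≤ K ^ pm * (S * ∫⁻ y, (g₁ y ^ (p y / pm)) ^ pm) := by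
          gcongr
          exact lintegral_maximalFn_rpow_le hn hpm hgsm
      _ = K ^ pm * (S * ∫⁻ y, g₁ y ^ p y) := by
          simp_rw [← ENNReal.rpow_mul, div_mul_cancel₀ _ hpm0.ne']
      _ ≤ _ := by gcongr
  calc ∫⁻ x, maximalFn g x ^ p x
      ≤ ∫⁻ x, 2 ^ (P - 1) * (maximalFn g₁ x ^ p x + maximalFn g₂ x ^ p x) := by
        refine lintegral_mono_ae ?_
        filter_upwards [hb] with x hx
        calc maximalFn g x ^ p x ≤ (maximalFn g₁ x + maximalFn g₂ x) ^ p x :=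
              ENNReal.rpow_le_rpow (hsum x) (by linarith [hx.1])
          _ ≤ 2 ^ (p x - 1) * (maximalFn g₁ x ^ p x + maximalFn g₂ x ^ p x) :=
              ENNReal.rpow_add_le_mul_rpow_add_rpow _ _ (by linarith [hx.1])
          _ ≤ _ := by
              gcongr
              · norm_num
              · exact hx.2
    _ = 2 ^ (P - 1) * ((∫⁻ x, maximalFn g₁ x ^ p x) + ∫⁻ x, maximalFn g₂ x ^ p x) := by
        have hm₁ : Measurable fun x => maximalFn g₁ x ^ p x := (measurable_maximalFn hg₁m).pow hpmeas
        have hm₂ : Measurable fun x => maximalFn g₂ x ^ p x := (measurable_maximalFn hg₂m).pow hpmeas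
        rw [lintegral_const_mul _ (by exact hm₁.add hm₂), lintegral_add_left hm₁]
    _ ≤ _ := by
        gcongr
        exact h₂ g₂ hg₂m hg₂1 hle₂

end VariableExponent

lemma lintegral_div_rpow_le_one_of_luxNorm_lt {Ω : Type*} [MeasurableSpace Ω] {μ : Measure Ω}
    {p : Ω → ℝ} (hp : ∀ x, 0 ≤ p x) {f : Ω → ℝ≥0∞} {l : ℝ≥0∞} (h : luxNorm μ p f < l) :
    ∫⁻ x, (f x / l) ^ p x ∂μ ≤ 1 := by
  obtain ⟨t, ⟨-, ht⟩, htl⟩ := sInf_lt_iff.1 h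
  exact (lintegral_mono fun x =>
    ENNReal.rpow_le_rpow (ENNReal.div_le_div_left htl.le _) (hp x)).trans ht

lemma luxNorm_le {Ω : Type*} [MeasurableSpace Ω] {μ : Measure Ω} {p : Ω → ℝ} {f : Ω → ℝ≥0∞}
    {l : ℝ≥0∞} (hl : 0 < l) (h : ∫⁻ x, (f x / l) ^ p x ∂μ ≤ 1) : luxNorm μ p f ≤ l :=
  sInf_le ⟨hl, h⟩

/-- Boundedness of the Riesz potential `I_β` from the mixed space `L^{p(·)} ∩ L^q`
to `L^{r(·)}` with `r(·) = n p(·)/(n − βq)`. -/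
theorem stmt19 (n : ℕ) (hn : 1 ≤ n) (q : ℝ) (hq : 1 < q)
    (p : Rn n → ℝ) (hplog : IsPLog univ p)
    (hpminus : ∃ pm : ℝ, 1 < pm ∧ ∀ᵐ x ∂(volume : Measure (Rn n)), pm ≤ p x)
    (β : ℝ) (hβ : 0 < β)
    (hβp : ∃ P : ℝ, (∀ᵐ x ∂(volume : Measure (Rn n)), p x ≤ P) ∧ β < (n:ℝ) / P)
    (hβq : β < (n:ℝ) / q) :
    ∃ C > (0:ℝ), ∀ f : Rn n → ℝ, Measurable f →
      luxNormR volume p f < ⊤ → luxNormR volume (fun _ => q) f < ⊤ →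
      luxNorm volume (fun x => (n:ℝ) * p x / ((n:ℝ) - β * q)) (rieszPot n β f)
        ≤ ENNReal.ofReal C * max (luxNormR volume p f) (luxNormR volume (fun _ => q) f) := by
  obtain ⟨pm, hpm, hpm'⟩ := hpminus
  obtain ⟨P, hP, -⟩ := hβp
  obtain ⟨A₀, hA₀, hA⟩ := hplog.exists_lintegral_maximalFn_rpow_le hn hpm (hpm'.and hP)
  obtain ⟨K₀, hK₀, hK⟩ := exists_lintegral_mul_rpow_norm_sub_le_maximalFn (n := n) hq hβ hβq
  have hp1 : ∀ x, 1 ≤ p x := fun x => hplog.2.1 x (mem_univ x)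
  have hn0 : (0 : ℝ) < n := by exact_mod_cast hn
  have hβqn : β * q < n := (lt_div_iff₀ (by linarith)).1 hβq
  have hd : 0 < n - β * q := by linarith
  have hr1 : ∀ x, 1 ≤ n * p x / (n - β * q) := fun x => by
    rw [one_le_div hd]
    nlinarith [hp1 x, mul_pos hβ (show 0 < q by linarith)]
  set A : ℝ := max 1 A₀.toReal
  have hA1 : 1 ≤ A := le_max_left _ _
  have hA0 : ENNReal.ofReal A ≠ 0 := by simpa using (by linarith : 0 < A)
  have hA₀A : A₀ ≤ ENNReal.ofReal A :=
    (ENNReal.le_ofReal_iff_toReal_le hA₀ (by linarith)).2 (le_max_right _ _)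
  set K : ℝ := max 1 K₀.toReal
  have hK1 : 1 ≤ K := le_max_left _ _
  have hK0 : ENNReal.ofReal K ≠ 0 := by simpa using (by linarith : 0 < K)
  have hK₀K : K₀ ≤ ENNReal.ofReal K :=
    (ENNReal.le_ofReal_iff_toReal_le hK₀ (by linarith)).2 (le_max_right _ _)
  refine ⟨K * A, by positivity, fun f hf hfp hfq => ?_⟩
  have hC : ENNReal.ofReal (K * A) = ENNReal.ofReal K * ENNReal.ofReal A :=
    ENNReal.ofReal_mul (by linarith)
  have hC0 : ENNReal.ofReal (K * A) ≠ 0 := by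
    rw [hC]
    exact mul_ne_zero hK0 hA0
  rw [← ENNReal.div_le_iff' hC0 ENNReal.ofReal_ne_top]
  refine le_of_forall_gt_imp_ge_of_dense fun l hl => ?_
  rcases eq_or_ne l ⊤ with rfl | hlt
  · exact le_top
  have hl0 : 0 < l := hl.bot_lt
  rw [ENNReal.div_le_iff' hC0 ENNReal.ofReal_ne_top]
  set g : Rn n → ℝ≥0∞ := fun y => ENNReal.ofReal |f y| / l
  have hg : Measurable g := by fun_prop
  have hgp : ∫⁻ y, g y ^ p y ≤ 1 := lintegral_div_rpow_le_one_of_luxNorm_lt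
    (fun x => zero_le_one.trans (hp1 x)) ((le_max_left _ _).trans_lt hl)
  have hgq : ∫⁻ y, g y ^ q ≤ 1 := lintegral_div_rpow_le_one_of_luxNorm_lt
    (fun _ => by linarith) ((le_max_right _ _).trans_lt hl)
  have hI : ∀ x, rieszPot n β f x / l = ∫⁻ y, g y * ENNReal.ofReal (‖x - y‖ ^ (β - n)) := by
    intro x
    rw [rieszPot, div_eq_mul_inv, ← lintegral_mul_const' _ _ (ENNReal.inv_ne_top.2 hl0.ne')]
    exact lintegral_congr fun y => by rw [mul_right_comm]; rfl
  refine luxNorm_le (ENNReal.mul_pos hC0 hl0.ne') ?_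
  calc ∫⁻ x, (rieszPot n β f x / (ENNReal.ofReal (K * A) * l)) ^ (n * p x / (n - β * q))
      ≤ ∫⁻ x, (ENNReal.ofReal A)⁻¹ * maximalFn g x ^ p x := by
        refine lintegral_mono fun x => ?_
        have h1 : rieszPot n β f x / (ENNReal.ofReal (K * A) * l) ≤
            (ENNReal.ofReal A)⁻¹ * maximalFn g x ^ (1 - β * q / n) := by
          rw [div_eq_mul_inv, ENNReal.mul_inv (Or.inl hC0) (Or.inl ENNReal.ofReal_ne_top),
            mul_left_comm, ← div_eq_mul_inv, hI x, hC,
            ENNReal.mul_inv (Or.inl hK0) (Or.inl ENNReal.ofReal_ne_top), mul_comm (_)⁻¹, mul_assoc]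
          refine mul_le_mul_right ?_ _
          rw [mul_comm, ← div_eq_mul_inv]
          refine ENNReal.div_le_of_le_mul' ?_
          refine (hK g hg hgq x).trans ?_
          gcongr
        have hr0 : 0 ≤ n * p x / (n - β * q) := zero_le_one.trans (hr1 x)
        calc _ ≤ ((ENNReal.ofReal A)⁻¹ * maximalFn g x ^ (1 - β * q / n)) ^
              (n * p x / (n - β * q)) := ENNReal.rpow_le_rpow h1 hr0
          _ = (ENNReal.ofReal A)⁻¹ ^ (n * p x / (n - β * q)) * maximalFn g x ^ p x := by
              rw [ENNReal.mul_rpow_of_nonneg _ _ hr0, ← ENNReal.rpow_mul]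
              congr 2
              field_simp
          _ ≤ (ENNReal.ofReal A)⁻¹ ^ (1 : ℝ) * maximalFn g x ^ p x := by
              refine mul_le_mul' (ENNReal.rpow_le_rpow_of_exponent_ge (ENNReal.inv_le_one.2 ?_) (hr1 x)) le_rfl
              exact ENNReal.one_le_ofReal.2 hA1
          _ = _ := by rw [ENNReal.rpow_one]
    _ = (ENNReal.ofReal A)⁻¹ * ∫⁻ x, maximalFn g x ^ p x :=
        lintegral_const_mul _ ((measurable_maximalFn hg).pow hplog.1)
    _ ≤ (ENNReal.ofReal A)⁻¹ * ENNReal.ofReal A := by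
        gcongr
        exact (hA g hg hgp).trans hA₀A
    _ = 1 := ENNReal.inv_mul_cancel hA0 ENNReal.ofReal_ne_top
end
end
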